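/- arXiv:1311.5626 — 2 statements merged into one kernel-verified Lean document; each statement's English description precedes it below -/
import Mathlib

section
/- Let d≥1 and n≥3. The Yokonuma–Temperley–Lieb algebra YTL_{d,n}(u) is a finite-dimensional ℂ(u)-vector space of dimension dim_{ℂ(u)} YTL_{d,n}(u) = (d(nd−n+d+1)/2)·C_n − d(d−1), where C_n = binom(2n,n)/(n+1) is the n-th Catalan number. -/
noncomputable section

/-- The field `K = ℂ(u)` of rational functions over `ℂ`. -/
abbrev K : Type := RatFunc ℂ

/-- The indeterminate `u ∈ ℂ(u)`. -/
def uu : K := RatFunc.X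

/-- The free `K`-algebra on generators `g_i` (`i : ℕ`, left summand) and `t_j`
(`j : ℕ`, right summand); the generators with invalid indices are killed by the relations. -/
abbrev FA : Type := FreeAlgebra K (ℕ ⊕ ℕ)

/-- The free generator `g_i`. -/
def Gf (i : ℕ) : FA := FreeAlgebra.ι K (Sum.inl i)

/-- The free generator `t_j`. -/
def Tf (j : ℕ) : FA := FreeAlgebra.ι K (Sum.inr j)

/-- The element `e_i = (1/d) ∑_{s=0}^{d-1} t_i^s t_{i+1}^{d-s}`. -/
def ef (d i : ℕ) : FA :=
  ((d : K)⁻¹) • ∑ s ∈ Finset.range d, Tf i ^ s * Tf (i + 1) ^ (d - s)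

/-- The transposition `s_i = (i, i+1)` applied to `j`. -/
def swapIdx (i j : ℕ) : ℕ := if j = i then i + 1 else if j = i + 1 then i else j

/-- The defining relations of the Yokonuma–Hecke algebra `Y_{d,n}(u)`, together with junk
relations killing the generators with out-of-range indices (so that the quotient is presented
exactly by `g_1, …, g_{n-1}, t_1, …, t_n`). -/
inductive YRel (d n : ℕ) : FA → FA → Prop
  | commute (i j : ℕ) (hi : 1 ≤ i) (hin : i + 1 ≤ n) (hj : 1 ≤ j) (hjn : j + 1 ≤ n)
      (hfar : i + 1 < j ∨ j + 1 < i) :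
      YRel d n (Gf i * Gf j) (Gf j * Gf i)
  | braid (i : ℕ) (hi : 1 ≤ i) (hin : i + 2 ≤ n) :
      YRel d n (Gf i * Gf (i + 1) * Gf i) (Gf (i + 1) * Gf i * Gf (i + 1))
  | tcomm (i j : ℕ) (hi : 1 ≤ i) (hin : i ≤ n) (hj : 1 ≤ j) (hjn : j ≤ n) :
      YRel d n (Tf i * Tf j) (Tf j * Tf i)
  | tg (i j : ℕ) (hi : 1 ≤ i) (hin : i + 1 ≤ n) (hj : 1 ≤ j) (hjn : j ≤ n) :
      YRel d n (Tf j * Gf i) (Gf i * Tf (swapIdx i j))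
  | torder (j : ℕ) (hj : 1 ≤ j) (hjn : j ≤ n) :
      YRel d n (Tf j ^ d) 1
  | quad (i : ℕ) (hi : 1 ≤ i) (hin : i + 1 ≤ n) :
      YRel d n (Gf i ^ 2) (1 + (uu - 1) • ef d i + (uu - 1) • (ef d i * Gf i))
  | gjunk (i : ℕ) (h : i = 0 ∨ n ≤ i) : YRel d n (Gf i) 0
  | tjunk (j : ℕ) (h : j = 0 ∨ n < j) : YRel d n (Tf j) 0

/-- The Yokonuma–Hecke algebra `Y_{d,n}(u)`. -/
abbrev YH (d n : ℕ) : Type := RingQuot (YRel d n)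

/-- The generator `g_i` of `Y_{d,n}(u)`. -/
def yg (d n : ℕ) (i : ℕ) : YH d n := RingQuot.mkAlgHom K (YRel d n) (Gf i)

/-- The generator `t_j` of `Y_{d,n}(u)`. -/
def yt (d n : ℕ) (j : ℕ) : YH d n := RingQuot.mkAlgHom K (YRel d n) (Tf j)

/-- The idempotent `e_i ∈ Y_{d,n}(u)`. -/
def ye (d n : ℕ) (i : ℕ) : YH d n := RingQuot.mkAlgHom K (YRel d n) (ef d i)

end

/-- The defining relations of the Yokonuma–Temperley–Lieb algebra `YTL_{d,n}(u)`: the relations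
of `Y_{d,n}(u)` together with
`g_i g_{i+1} g_i + g_i g_{i+1} + g_{i+1} g_i + g_i + g_{i+1} + 1 = 0` for `1 ≤ i ≤ n-2`. -/
inductive YTLRel (d n : ℕ) : FA → FA → Prop
  | base {a b : FA} : YRel d n a b → YTLRel d n a b
  | tl (i : ℕ) (hi : 1 ≤ i) (hin : i + 2 ≤ n) :
      YTLRel d n
        (Gf i * Gf (i + 1) * Gf i + Gf i * Gf (i + 1) + Gf (i + 1) * Gf i +
          Gf i + Gf (i + 1) + 1) 0

/-- The Yokonuma–Temperley–Lieb algebra `YTL_{d,n}(u)`, the quotient of `Y_{d,n}(u)` by the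
two-sided ideal generated by the elements
`g_i g_{i+1} g_i + g_i g_{i+1} + g_{i+1} g_i + g_i + g_{i+1} + 1`, `1 ≤ i ≤ n-2`. -/
abbrev YTL (d n : ℕ) : Type := RingQuot (YTLRel d n)

/-- The image of the generator `g_i` in `YTL_{d,n}(u)`. -/
noncomputable def zg (d n : ℕ) (i : ℕ) : YTL d n :=
  RingQuot.mkAlgHom K (YTLRel d n) (Gf i)

/-- The image of the generator `t_j` in `YTL_{d,n}(u)`. -/
noncomputable def zt (d n : ℕ) (j : ℕ) : YTL d n :=
  RingQuot.mkAlgHom K (YTLRel d n) (Tf j)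

/-!
The elements `t_j` commute and are annihilated by `X ^ d - 1`, so their joint eigenprojections
split the algebra into left ideals indexed by the weights `χ : {1, …, n} → {1, …, d}`, and `g_i`
permutes the eigenspaces as the transposition `(i, i + 1)` permutes the weights. On an eigenspace,
`e_i` is `1` or `0` according to whether `χ i = χ (i + 1)`, and the Temperley–Lieb relation then
makes every eigenspace with three distinct eigenvalues vanish.

For a constant weight the corner algebra is the ordinary Temperley–Lieb algebra. It is spanned by
the Jones normal words, and these act on the noncrossing matchings of `ℤ` by linearly independent
operators, so their number, the Catalan number `C_n`, is the dimension.

For a weight with exactly two values, one of them taken on a `k`-subset `S`, the relations force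
`g_i` to act by `-1` wherever `χ i = χ (i + 1)`. The left ideal is therefore spanned by one element
for each `k`-subset, and the signed permutation action on `k`-subsets shows that these are
independent. There are `d (d - 1) / 2` choices of the two values, and the sum over `S` of
`binom(n, |S|)` is `∑ k, binom(n, k) ^ 2 - 2 = binom(2 n, n) - 2`.
-/

namespace TemperleyLieb

open Equiv Finset

/-- The product `V k * V (k + 1) * ⋯ * V (m - 1)` of consecutive generators. -/
def block {A : Type*} [Monoid A] (V : ℕ → A) (k m : ℕ) : A := ((List.range' k (m - k)).map V).prod

/-- The Jones normal words in the letters `0, …, m - 1` whose first letter is less than `j`: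
concatenations of increasing blocks `[k₁, …, i₁] ++ [k₂, …, i₂] ++ ⋯` with `k₁ > k₂ > ⋯` and
`i₁ > i₂ > ⋯`. The letter `m` can occur only as the end of the first block. -/
def normalWords : ℕ → ℕ → Finset (List ℕ)
  | 0, _ => {[]}
  | m + 1, j => normalWords m j ∪
      (range (min j (m + 1))).biUnion fun k =>
        (normalWords m k).image (List.range' k (m + 1 - k) ++ ·)

/-- The relations of the Temperley–Lieb algebra on generators `V 0, …, V (n - 2)`, with loop
parameter `u + 1` and `V i * V (i ± 1) * V i = u • V i`. -/
structure Relations {R A : Type*} [CommSemiring R] [Semiring A] [Algebra R A] (n : ℕ) (u : R)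
    (V : ℕ → A) : Prop where
  sq : ∀ i, i + 1 < n → V i * V i = (u + 1) • V i
  up : ∀ i, i + 2 < n → V i * V (i + 1) * V i = u • V i
  down : ∀ i, i + 2 < n → V (i + 1) * V i * V (i + 1) = u • V (i + 1)
  comm : ∀ i j, i + 1 < j → j + 1 < n → Commute (V i) (V j)

section NormalWords

lemma mem_normalWords_succ {m j : ℕ} {w : List ℕ} :
    w ∈ normalWords (m + 1) j ↔ w ∈ normalWords m j ∨
      ∃ k < j, k ≤ m ∧ ∃ w' ∈ normalWords m k, List.range' k (m + 1 - k) ++ w' = w := by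
  simp only [normalWords, mem_union, mem_biUnion, mem_range, lt_min_iff, Order.lt_add_one_iff,
    mem_image, and_assoc]

lemma normalWords_subset_succ (m j : ℕ) : normalWords m j ⊆ normalWords (m + 1) j :=
  fun _ hw => mem_normalWords_succ.2 (Or.inl hw)

lemma normalWords_subset {m j j' : ℕ} (h : min j m ≤ j') :
    normalWords m j ⊆ normalWords m j' := by
  induction m with
  | zero => exact Subset.refl _
  | succ m ih =>
    intro w hw
    rw [mem_normalWords_succ] at hw ⊢
    exact hw.imp (@ih (by omega) w) fun ⟨k, hkj, hkm, hw'⟩ => ⟨k, by omega, hkm, hw'⟩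

lemma nil_mem_normalWords (m j : ℕ) : [] ∈ normalWords m j := by
  induction m with
  | zero => exact mem_singleton_self _
  | succ m ih => exact normalWords_subset_succ m j ih

lemma normalWords_zero_right (m : ℕ) : normalWords m 0 = {[]} := by
  induction m with
  | zero => rfl
  | succ m ih => simp [normalWords, ih]

lemma lt_of_mem_normalWords {m j i : ℕ} {w : List ℕ} (hw : w ∈ normalWords m j) (hi : i ∈ w) :
    i < m := by
  induction m generalizing j w with
  | zero => simp_all [normalWords]
  | succ m ih =>
    rcases mem_normalWords_succ.1 hw with hw | ⟨k, -, hkm, w', hw', rfl⟩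
    · exact (ih hw hi).trans (Nat.lt_succ_self m)
    · rw [List.mem_append, List.mem_range'_1] at hi
      rcases hi with hi | hi
      · omega
      · exact (ih hw' hi).trans (Nat.lt_succ_self m)

lemma exists_block_of_mem_normalWords {m j k : ℕ} {w : List ℕ} (hw : w ∈ normalWords m j)
    (hk : w ∉ normalWords m k) :
    ∃ l i, k ≤ l ∧ l < i ∧ i ≤ m ∧ ∃ w' ∈ normalWords m m, w = List.range' l (i - l) ++ w' := by
  induction m with
  | zero => exact absurd hw hk
  | succ m ih =>
    rw [mem_normalWords_succ] at hw
    rcases hw with hw | ⟨l, -, hlm, w', hw', rfl⟩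
    · obtain ⟨l, i, hkl, hli, him, w', hw', e⟩ :=
        ih hw fun h => hk (normalWords_subset_succ m k h)
      exact ⟨l, i, hkl, hli, by omega, w',
        normalWords_subset (by omega) (normalWords_subset_succ m m hw'), e⟩
    · refine ⟨l, m + 1, ?_, by omega, le_rfl, w',
        normalWords_subset (by omega) (normalWords_subset_succ m l hw'), rfl⟩
      by_contra! hlk
      exact hk (mem_normalWords_succ.2 (Or.inr ⟨l, hlk, hlm, w', hw', rfl⟩))

end NormalWords

section Count

lemma card_normalWords_succ {m j : ℕ} (hj : j ≤ m + 1) :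
    #(normalWords (m + 1) j) = #(normalWords m j) + ∑ k ∈ range j, #(normalWords m k) := by
  rw [normalWords, card_union_of_disjoint, min_eq_left hj, card_biUnion]
  · congr 1
    exact sum_congr rfl fun k _ => card_image_of_injective _ (List.append_right_injective _)
  · intro k hk l hl hkl
    rw [mem_coe, mem_range] at hk hl
    simp only [disjoint_left, mem_image, not_exists, not_and, forall_exists_index, and_imp]
    rintro _ w - rfl w' - e
    have hhead := congrArg List.head? e
    exact hkl (by simpa [show m + 1 - k = m - k + 1 by omega,
      show m + 1 - l = m - l + 1 by omega, List.range'_succ] using hhead.symm)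
  · refine disjoint_left.2 fun w hw hw' => ?_
    simp only [mem_biUnion, mem_range, mem_image] at hw'
    obtain ⟨k, hk, w', -, rfl⟩ := hw'
    refine (lt_of_mem_normalWords hw (List.mem_append_left w' ?_)).false
    rw [List.mem_range'_1]
    omega

lemma card_normalWords_succ_succ {m j : ℕ} (hj : j ≤ m) :
    #(normalWords (m + 1) (j + 1)) = #(normalWords (m + 1) j) + #(normalWords m (j + 1)) := by
  rw [card_normalWords_succ (by omega), card_normalWords_succ (by omega), sum_range_succ]
  omega

-- The ballot numbers; the subtraction is moved to the other side.
lemma card_normalWords_add_choose {m j : ℕ} (hj : j ≤ m) :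
    #(normalWords m (j + 1)) + (m + 2 + j).choose j = (m + 2 + j).choose (j + 1) := by
  induction m generalizing j with
  | zero =>
    obtain rfl : j = 0 := by omega
    rfl
  | succ m ihm =>
    induction j with
    | zero =>
      have := @ihm 0 (Nat.zero_le m)
      rw [card_normalWords_succ_succ (Nat.zero_le m), normalWords_zero_right]
      simp at this ⊢
      omega
    | succ j ihj =>
      have ihj := ihj (by omega)
      have pascal₁ := Nat.choose_succ_succ' (m + 1 + 2 + j) j
      have pascal₂ := Nat.choose_succ_succ' (m + 1 + 2 + j) (j + 1)
      rw [show m + 1 + 2 + (j + 1) = m + 1 + 2 + j + 1 by ring, pascal₁, pascal₂]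
      rcases hj.lt_or_eq with hjm | hjm
      · have ihm := @ihm (j + 1) (by omega)
        rw [show m + 2 + (j + 1) = m + 1 + 2 + j by ring] at ihm
        rw [card_normalWords_succ_succ (by omega)]
        omega
      · obtain rfl : j = m := by omega
        have hstable : normalWords (j + 1) (j + 1 + 1) = normalWords (j + 1) (j + 1) :=
          (normalWords_subset (by omega)).antisymm (normalWords_subset (by omega))
        have hsymm := Nat.choose_symm_of_eq_add (show j + 1 + 2 + j = (j + 1) + (j + 2) by ring)
        rw [hstable, show j + 1 + 1 = j + 2 by ring]
        omega

lemma card_normalWords_self (m : ℕ) : #(normalWords m m) = catalan (m + 1) := by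
  have hsub : normalWords m m = normalWords m (m + 1) :=
    (normalWords_subset (by omega)).antisymm (normalWords_subset (by omega))
  have hballot := card_normalWords_add_choose (le_refl m)
  have hratio := Nat.choose_succ_right_eq (m + 2 + m) m
  have hcatalan := succ_mul_catalan_eq_centralBinom (m + 1)
  rw [Nat.centralBinom, show 2 * (m + 1) = m + 2 + m by ring] at hcatalan
  rw [show m + 2 + m - m = m + 2 by omega] at hratio
  refine Nat.eq_of_mul_eq_mul_left (show 0 < m + 1 + 1 by omega) ?_
  rw [hsub, hcatalan]
  zify at *
  linear_combination (m + 2 : ℤ) * hballot + hratio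

end Count

section Block

variable {A : Type*} [Monoid A] (V : ℕ → A)

lemma block_self (k : ℕ) : block V k k = 1 := by
  rw [block, Nat.sub_self, List.range'_zero, List.map_nil, List.prod_nil]

lemma block_append {k j m : ℕ} (hkj : k ≤ j) (hjm : j ≤ m) :
    block V k m = block V k j * block V j m := by
  obtain ⟨a, rfl⟩ := Nat.exists_eq_add_of_le hkj
  obtain ⟨b, rfl⟩ := Nat.exists_eq_add_of_le hjm
  rw [block, block, block, ← List.prod_append, ← List.map_append]
  simp [show k + a + b - k = a + b by omega]

lemma block_succ (k : ℕ) : block V k (k + 1) = V k := by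
  simp [block]

lemma block_cons {k m : ℕ} (h : k < m) : block V k m = V k * block V (k + 1) m := by
  rw [block_append V k.le_succ h, block_succ]

lemma prod_map_range'_append (k m : ℕ) (w : List ℕ) :
    ((List.range' k (m - k) ++ w).map V).prod = block V k m * (w.map V).prod := by
  rw [block, List.map_append, List.prod_append]

variable {V}

lemma commute_block {x : A} {k m : ℕ} (h : ∀ l, k ≤ l → l < m → Commute x (V l)) :
    Commute x (block V k m) := by
  refine Commute.list_prod_right _ _ fun y hy => ?_
  obtain ⟨l, hl, rfl⟩ := List.mem_map.1 hy
  rw [List.mem_range'_1] at hl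
  exact h l hl.1 (by omega)

end Block

section Span

variable {R A : Type*} [CommSemiring R] [Semiring A] [Algebra R A] {n : ℕ} {u : R} {V : ℕ → A}

lemma Relations.commute_block_block (h : Relations n u V) {k i j m : ℕ} (hij : i < j)
    (hm : m < n) : Commute (block V j m) (block V k i) :=
  commute_block fun _ _ _ => (commute_block fun _ _ _ => h.comm _ _ (by omega) (by omega)).symm

lemma Relations.mul_block (h : Relations n u V) {k i m : ℕ} (hki : k ≤ i) (him : i + 1 < m)
    (hm : m < n) : V (i + 1) * block V k m = u • (block V (i + 1) m * block V k i) := by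
  have hcomm : Commute (V (i + 1)) (block V k i) :=
    commute_block fun l _ _ => (h.comm l (i + 1) (by omega) (by omega)).symm
  calc V (i + 1) * block V k m
      = V (i + 1) * (block V k i * (V i * (V (i + 1) * block V (i + 2) m))) := by
        rw [block_append V hki (by omega), block_cons V (show i < m by omega), block_cons V him]
    _ = block V k i * (V (i + 1) * V i * V (i + 1)) * block V (i + 2) m := by
        rw [← mul_assoc, hcomm.eq]
        simp only [mul_assoc]
    _ = u • (block V k i * block V (i + 1) m) := by
        rw [h.down i (by omega), block_cons V him]
        simp only [mul_assoc, smul_mul_assoc, mul_smul_comm]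
    _ = u • (block V (i + 1) m * block V k i) := by
        rw [(h.commute_block_block i.lt_succ_self hm).eq]

lemma Relations.block_mul_block (h : Relations n u V) {k j i m : ℕ} (hkj : k ≤ j) (hji : j < i)
    (him : i < m) (hm : m < n) :
    block V k m * block V j i = u • (block V (j + 2) m * block V k i) := by
  have hcomm : Commute (V j) (block V (j + 2) m) :=
    commute_block fun l _ _ => h.comm j l (by omega) (by omega)
  have hblock : block V k (j + 1) = block V k j * V j := by
    rw [block_append V hkj j.le_succ, block_succ]
  calc block V k m * block V j i
      = block V k j * (V j * (V (j + 1) * block V (j + 2) m)) * (V j * block V (j + 1) i) := by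
        rw [block_append V hkj (by omega), block_cons V (show j < m by omega),
          block_cons V (show j + 1 < m by omega), block_cons V hji]
    _ = block V k j * (V j * V (j + 1) * (block V (j + 2) m * V j)) * block V (j + 1) i := by
        simp only [mul_assoc]
    _ = block V k j * (V j * V (j + 1) * V j) * block V (j + 2) m * block V (j + 1) i := by
        rw [← hcomm.eq]
        simp only [mul_assoc]
    _ = u • (block V k (j + 1) * block V (j + 2) m * block V (j + 1) i) := by
        rw [h.up j (by omega), hblock, mul_smul_comm, smul_mul_assoc, smul_mul_assoc]
    _ = u • (block V (j + 2) m * block V k i) := by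
        rw [← (h.commute_block_block (Nat.lt_succ_self _) hm).eq, mul_assoc,
          ← block_append V (by omega) hji]

lemma block_mul_mem {S : Submodule R A} {k m : ℕ} (hS : ∀ l < m, ∀ x ∈ S, V l * x ∈ S) {x : A}
    (hx : x ∈ S) : block V k m * x ∈ S := by
  have key : ∀ w : List ℕ, (∀ l ∈ w, l < m) → (w.map V).prod * x ∈ S := by
    intro w hw
    induction w with
    | nil => simpa using hx
    | cons l w ih =>
      rw [List.map_cons, List.prod_cons, mul_assoc]
      exact hS l (hw l List.mem_cons_self) _ (ih fun i hi => hw i (List.mem_cons_of_mem l hi))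
  refine key _ fun l hl => ?_
  rw [List.mem_range'_1] at hl
  omega

variable (R V) in
/-- The span of the products of generators along the normal words in the letters `0, …, m - 1`. -/
def wordSpan (m : ℕ) : Submodule R A :=
  Submodule.span R ((fun w => (w.map V).prod) '' (normalWords m m : Set (List ℕ)))

lemma prod_mem_wordSpan {m j : ℕ} {w : List ℕ} (hw : w ∈ normalWords m j) :
    (w.map V).prod ∈ wordSpan R V m :=
  Submodule.subset_span ⟨w, normalWords_subset (min_le_right j m) hw, rfl⟩

lemma one_mem_wordSpan (m : ℕ) : (1 : A) ∈ wordSpan R V m :=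
  prod_mem_wordSpan (nil_mem_normalWords m 0)

lemma mul_mem_of_mem_wordSpan {m : ℕ} {a : A} {S : Submodule R A}
    (h : ∀ w ∈ normalWords m m, a * (w.map V).prod ∈ S) {x : A} (hx : x ∈ wordSpan R V m) :
    a * x ∈ S := by
  have hle : wordSpan R V m ≤ S.comap (LinearMap.mulLeft R a) :=
    Submodule.span_le.2 (Set.forall_mem_image.2 h)
  exact hle hx

lemma wordSpan_le_succ (m : ℕ) : wordSpan R V m ≤ wordSpan R V (m + 1) :=
  Submodule.span_le.2 (Set.forall_mem_image.2 fun _ hw =>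
    prod_mem_wordSpan (normalWords_subset_succ m m hw))

-- A block followed by a word with a larger first letter is rewritten with a later block.
lemma Relations.block_mul_mem_wordSpan (h : Relations n u V) {k m : ℕ} (hm : m + 1 < n)
    (closed : ∀ i < m, ∀ x ∈ wordSpan R V m, V i * x ∈ wordSpan R V m) (hk : k ≤ m + 1) {x : A}
    (hx : x ∈ wordSpan R V m) : block V k (m + 1) * x ∈ wordSpan R V (m + 1) := by
  rcases hk.eq_or_lt with rfl | hkm
  · rw [block_self, one_mul]
    exact wordSpan_le_succ m hx
  refine mul_mem_of_mem_wordSpan (fun w hw => ?_) hx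
  by_cases hwk : w ∈ normalWords m k
  · rw [← prod_map_range'_append]
    exact prod_mem_wordSpan
      (mem_normalWords_succ.2 (Or.inr ⟨k, hkm, by omega, w, hwk, rfl⟩))
  · obtain ⟨j, i, hkj, hji, him, w', hw', rfl⟩ := exists_block_of_mem_normalWords hw hwk
    rw [prod_map_range'_append, ← mul_assoc,
      h.block_mul_block hkj hji (by omega) hm, smul_mul_assoc, mul_assoc]
    exact Submodule.smul_mem _ _ (h.block_mul_mem_wordSpan hm closed (by omega)
      (block_mul_mem (fun l hl => closed l (by omega)) (prod_mem_wordSpan hw')))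
termination_by m + 1 - k

lemma Relations.mul_block_mul_mem_wordSpan (h : Relations n u V) {i k m : ℕ} (hm : m + 1 < n)
    (closed : ∀ i < m, ∀ x ∈ wordSpan R V m, V i * x ∈ wordSpan R V m) (hi : i ≤ m)
    (hk : k ≤ m) {x : A} (hx : x ∈ wordSpan R V m) :
    V i * (block V k (m + 1) * x) ∈ wordSpan R V (m + 1) := by
  have hblock {l : ℕ} (hl : l ≤ m + 1) {y : A} (hy : y ∈ wordSpan R V m) :
      block V l (m + 1) * y ∈ wordSpan R V (m + 1) := h.block_mul_mem_wordSpan hm closed hl hy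
  rw [← mul_assoc]
  rcases lt_trichotomy k i with hki | rfl | hik
  · obtain ⟨i, rfl⟩ : ∃ l, i = l + 1 := ⟨i - 1, by omega⟩
    rw [h.mul_block (by omega) (by omega) hm, smul_mul_assoc, mul_assoc]
    exact Submodule.smul_mem _ _ (hblock (by omega)
      (block_mul_mem (fun l hl => closed l (by omega)) hx))
  · rw [block_cons V (by omega), ← mul_assoc, h.sq k (by omega), smul_mul_assoc,
      ← block_cons V (by omega), smul_mul_assoc]
    exact Submodule.smul_mem _ _ (hblock (by omega) hx)
  · rcases (Nat.succ_le_of_lt hik).eq_or_lt with rfl | hik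
    · rw [← block_cons V (by omega)]
      exact hblock (by omega) hx
    · have hcomm : Commute (V i) (block V k (m + 1)) :=
        commute_block fun l _ _ => h.comm i l (by omega) (by omega)
      rw [hcomm.eq, mul_assoc]
      exact hblock (by omega) (closed i (by omega) _ hx)

lemma Relations.mul_mem_wordSpan (h : Relations n u V) {m : ℕ} (hm : m < n) :
    ∀ i < m, ∀ x ∈ wordSpan R V m, V i * x ∈ wordSpan R V m := by
  induction m with
  | zero => exact fun i hi => absurd hi i.not_lt_zero
  | succ m ih =>
    intro i hi x hx
    have closed := ih (by omega)
    refine mul_mem_of_mem_wordSpan (fun w hw => ?_) hx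
    rcases mem_normalWords_succ.1 hw with hw | ⟨k, -, hkm, w', hw', rfl⟩
    · rcases (Nat.le_of_lt_succ hi).eq_or_lt with rfl | him
      · rw [← block_succ V]
        exact h.block_mul_mem_wordSpan hm closed i.le_succ (prod_mem_wordSpan hw)
      · exact wordSpan_le_succ m (closed i him _ (prod_mem_wordSpan hw))
    · rw [prod_map_range'_append]
      exact h.mul_block_mul_mem_wordSpan hm closed (by omega) hkm (prod_mem_wordSpan hw')

end Span

/-- Perfect matchings of a set `α`, encoded as fixed point free involutions. -/
structure Matching (α : Type*) where
  /-- The permutation exchanging the two ends of every arc. -/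
  toPerm : Perm α
  apply_apply : ∀ x, toPerm (toPerm x) = x
  apply_ne : ∀ x, toPerm x ≠ x

namespace Matching

section Connect

variable {α : Type*}

instance : CoeFun (Matching α) fun _ => α → α := ⟨fun σ => σ.toPerm⟩

lemma apply_eq_iff (σ : Matching α) {x y : α} : σ x = y ↔ σ y = x :=
  ⟨fun h => h ▸ σ.apply_apply x, fun h => h ▸ σ.apply_apply y⟩

@[ext] lemma ext {σ τ : Matching α} (h : ∀ x, σ x = τ x) : σ = τ := by
  cases σ
  cases τ
  congr
  exact Equiv.ext h

/-- Permutations of the points act on matchings by conjugation. -/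
instance : MulAction (Perm α) (Matching α) where
  smul π σ := ⟨π * σ.toPerm * π⁻¹, fun x => by simp [σ.apply_apply],
    fun x h => σ.apply_ne (π⁻¹ x) (Perm.eq_inv_iff_eq.2 h)⟩
  one_smul _ := ext fun _ => rfl
  mul_smul π ρ σ := ext fun x => show (π * ρ * σ.toPerm * (π * ρ)⁻¹) x = _ by
    rw [mul_inv_rev]; rfl

lemma smul_apply (π : Perm α) (σ : Matching α) (x : α) : (π • σ) x = π (σ (π⁻¹ x)) := rfl

lemma smul_apply_apply (π : Perm α) (σ : Matching α) (x : α) : (π • σ) (π x) = π (σ x) := by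
  simp [smul_apply]

variable [DecidableEq α]

lemma swap_smul_eq_self {a b : α} {σ : Matching α} (h : σ a = b) : swap a b • σ = σ := by
  ext x
  have := σ.apply_apply a
  have := σ.apply_apply x
  simp only [smul_apply, swap_inv, swap_apply_def]
  grind

/-- The Temperley–Lieb surgery on matchings: `a` is matched with `b`, and their former partners
with each other. Conjugation by the transposition of `b` and the partner of `a` does this. -/
def connect (a b : α) (σ : Matching α) : Matching α := swap b (σ a) • σ

lemma connect_eq_self {a b : α} {σ : Matching α} (h : σ a = b) : connect a b σ = σ := by
  rw [connect, h, swap_self]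
  exact one_smul _ σ

lemma connect_apply_left {a b : α} (hab : a ≠ b) (σ : Matching α) : connect a b σ a = b := by
  rw [connect, smul_apply, swap_inv, swap_apply_of_ne_of_ne hab (σ.apply_ne a).symm,
    swap_apply_right]

lemma connect_apply_right {a b : α} (hab : a ≠ b) (σ : Matching α) : connect a b σ b = a :=
  (apply_eq_iff _).1 (connect_apply_left hab σ)

lemma connect_apply_of_ne {a b x : α} {σ : Matching α} (hxa : x ≠ a) (hxb : x ≠ b)
    (hσa : σ x ≠ a) (hσb : σ x ≠ b) : connect a b σ x = σ x := by
  have hx : x ≠ σ a := fun h => hσa (σ.apply_eq_iff.1 h.symm)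
  rw [connect, smul_apply, swap_inv, swap_apply_of_ne_of_ne hxb hx,
    swap_apply_of_ne_of_ne hσb (σ.toPerm.injective.ne hxa)]

lemma connect_apply_eq_iff {a b c d : α} {σ : Matching α} (hab : a ≠ b) (hcd : c ≠ d)
    (hac : a ≠ c) (had : a ≠ d) (hbc : b ≠ c) (hbd : b ≠ d) :
    connect c d σ a = b ↔ σ a = b ∨ σ a = c ∧ σ b = d ∨ σ a = d ∧ σ b = c := by
  have := σ.apply_apply a
  have := σ.apply_apply b
  have := σ.apply_apply c
  have := σ.apply_apply d
  have := σ.apply_ne d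
  simp only [connect, smul_apply, swap_inv, swap_apply_def]
  grind

lemma smul_connect (π : Perm α) (a b : α) (σ : Matching α) :
    π • connect a b σ = connect (π a) (π b) (π • σ) := by
  rw [connect, connect, smul_apply_apply, swap_apply_apply, smul_smul, smul_smul,
    inv_mul_cancel_right]

lemma connect_symm {a b : α} (hab : a ≠ b) (σ : Matching α) : connect a b σ = connect b a σ := by
  ext x
  have := σ.apply_apply a
  have := σ.apply_apply b
  have := σ.apply_apply x
  have := σ.apply_ne a
  have := σ.apply_ne b
  simp only [connect, smul_apply, swap_inv, swap_apply_def]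
  grind

/-- Moving the arc out of `{a, b}` and back along `{b, c}` is the zigzag of the Temperley–Lieb
relation `e_i e_{i ± 1} e_i = e_i`. -/
lemma connect_connect {a b c : α} (hbc : b ≠ c) {σ : Matching α} (h : σ a = b) :
    connect a b (connect b c σ) = σ := by
  have hab : a ≠ b := fun e => σ.apply_ne a (h.trans e.symm)
  have hπ : connect b c σ = swap c a • σ := by rw [connect, σ.apply_eq_iff.1 h]
  calc connect a b (connect b c σ)
      = swap c a • connect c b σ := by
        rw [hπ, smul_connect, swap_apply_left, swap_apply_of_ne_of_ne hbc hab.symm]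
    _ = σ := by rw [connect_symm hbc.symm, hπ, smul_smul, swap_mul_self, one_smul]

lemma connect_comm {a b c d : α} (hab : a ≠ b) (hcd : c ≠ d) (hac : a ≠ c) (had : a ≠ d)
    (hbc : b ≠ c) (hbd : b ≠ d) (σ : Matching α) :
    connect a b (connect c d σ) = connect c d (connect a b σ) := by
  ext x
  simp only [connect, smul_apply, swap_inv, swap_apply_def]
  have := σ.apply_apply a
  have := σ.apply_apply b
  have := σ.apply_apply c
  have := σ.apply_apply d
  have := σ.apply_apply x
  have := σ.apply_ne a
  have := σ.apply_ne b
  have := σ.apply_ne c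
  have := σ.apply_ne d
  grind (splits := 30)

end Connect

/-- The rainbow matching `x ↔ -1 - x` of `ℤ`. -/
def rainbow : Matching ℤ :=
  ⟨Equiv.subLeft (-1), fun x => by simp, fun x => by rw [subLeft_apply]; omega⟩

lemma rainbow_apply (x : ℤ) : rainbow x = -1 - x := subLeft_apply _ _

/-- The Temperley–Lieb generator of index `i` joins the points `i` and `i + 1`; a word of
generators acts from right to left. -/
def act (w : List ℕ) (τ : Matching ℤ) : Matching ℤ :=
  w.foldr (fun i σ => connect (i : ℤ) (i + 1) σ) τ

lemma act_cons (i : ℕ) (w : List ℕ) (τ : Matching ℤ) :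
    act (i :: w) τ = connect (i : ℤ) (i + 1) (act w τ) := rfl

lemma act_append (w w' : List ℕ) (τ : Matching ℤ) : act (w ++ w') τ = act w (act w' τ) := by
  simp [act]

/-- The permutation of the points by which the surgeries at `k, …, k + c` conjugate a matching
in which `p` and `k + c + 1` are matched. -/
def blockPerm (p : ℤ) : ℕ → ℤ → Perm ℤ
  | 0, k => swap k p
  | c + 1, k => swap k (k + 2) * swap (k + 1) (k + 2) * blockPerm p c (k + 1)

lemma blockPerm_apply {p k : ℤ} (hpk : p < k) (c : ℕ) (x : ℤ) :
    blockPerm p c k x = if x = p then k else if x = k + c then p else if x = k + c + 1 then k + 1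
      else if k ≤ x ∧ x < k + c then x + 2 else x := by
  induction c generalizing k x with
  | zero =>
    simp only [blockPerm, swap_apply_def]
    grind
  | succ c ih =>
    rw [blockPerm, Perm.mul_apply, Perm.mul_apply, ih (by omega)]
    push_cast
    simp only [swap_apply_def]
    grind

lemma act_range'_eq_smul {τ : Matching ℤ} {p : ℤ} (c : ℕ) {k : ℕ} (hpk : p < k)
    (hτ : τ p = k + c + 1) : act (List.range' k (c + 1)) τ = blockPerm p c k • τ := by
  induction c generalizing k with
  | zero =>
    have hp : τ (k + 1) = p := τ.apply_eq_iff.1 (by simpa using hτ)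
    rw [zero_add, List.range'_one, act_cons, connect_symm (by omega), connect]
    exact congrArg (swap (k : ℤ) · • τ) hp
  | succ c ih =>
    push_cast at hτ
    have hτ : τ p = k + 1 + c + 1 := by rw [hτ]; ring
    have ih := @ih (k + 1) (by omega) (by exact_mod_cast hτ)
    push_cast at ih
    rw [List.range'_succ, act_cons, ih, blockPerm, mul_smul, mul_smul]
    set σ := blockPerm p c (k + 1) • τ
    have hk : σ (k + 1) = k + 2 := by
      have hp : blockPerm p c (k + 1) p = k + 1 := by rw [blockPerm_apply (by omega), if_pos rfl]
      rw [← hp, smul_apply_apply, hτ, blockPerm_apply (by omega)]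
      grind
    rw [connect_symm (by omega), connect, hk, swap_smul_eq_self hk]

section NormalWords

variable {m k j : ℕ} {w : List ℕ}

lemma act_rainbow_apply_of_lt (hw : ∀ i ∈ w, i < m) {l : ℤ} (hl : m < l) :
    act w rainbow l = -1 - l := by
  induction w with
  | nil => exact rainbow_apply l
  | cons i w ih =>
    have hi := hw i List.mem_cons_self
    have ih := ih fun i hi => hw i (List.mem_cons_of_mem _ hi)
    rw [act_cons, connect_apply_of_ne (by omega) (by omega) (by omega) (by omega), ih]

lemma act_rainbow_apply_of_mem (hw : w ∈ normalWords m j) {l : ℤ} (hl : m < l) :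
    act w rainbow l = -1 - l :=
  act_rainbow_apply_of_lt (fun _ => lt_of_mem_normalWords hw) hl

lemma act_range'_append_rainbow (hkm : k ≤ m) (hw : w ∈ normalWords m j) :
    act (List.range' k (m + 1 - k) ++ w) rainbow =
      blockPerm (-(m + 2)) (m - k) k • act w rainbow := by
  have hfar : act w rainbow (m + 1) = -1 - (m + 1) := act_rainbow_apply_of_mem hw (by omega)
  have hp : act w rainbow (-(m + 2)) = k + (m - k : ℕ) + 1 := by
    rw [apply_eq_iff, show (k : ℤ) + (m - k : ℕ) + 1 = m + 1 by omega, hfar]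
    ring
  rw [act_append, show m + 1 - k = m - k + 1 by omega, act_range'_eq_smul _ (by omega) hp]

end NormalWords

section BlockPerm

variable {m k : ℕ} {τ : Matching ℤ}

lemma blockPerm_sub_apply (hkm : k ≤ m) (x : ℤ) :
    blockPerm (-(m + 2)) (m - k) k x = if x = -(m + 2) then (k : ℤ) else if x = m then -(m + 2)
      else if x = m + 1 then k + 1 else if k ≤ x ∧ x < m then x + 2 else x := by
  rw [blockPerm_apply (by omega), show (k : ℤ) + (m - k : ℕ) = m by omega]

lemma blockPerm_smul_apply_self (hkm : k ≤ m) (hτ : ∀ l : ℤ, m < l → τ l = -1 - l) :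
    (blockPerm (-(m + 2)) (m - k) k • τ) k = k + 1 := by
  have hp : τ (-(m + 2)) = m + 1 := by
    rw [apply_eq_iff, hτ _ (by omega)]
    ring
  have hπ := blockPerm_sub_apply hkm
  calc (blockPerm (-(m + 2)) (m - k) k • τ) k
      = (blockPerm (-(m + 2)) (m - k) k • τ) (blockPerm (-(m + 2)) (m - k) k (-(m + 2))) := by
        rw [hπ (-(m + 2)), if_pos rfl]
    _ = k + 1 := by
        rw [smul_apply_apply, hp, hπ]
        grind

lemma blockPerm_smul_apply_ne_succ (hkm : k ≤ m) (hτ : ∀ l : ℤ, m < l → τ l = -1 - l)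
    (harc : ∀ l : ℤ, k ≤ l → τ l ≠ l + 1) {l : ℤ} (hl : k < l) :
    (blockPerm (-(m + 2)) (m - k) k • τ) l ≠ l + 1 := by
  have hπ := blockPerm_sub_apply hkm
  obtain ⟨x, rfl⟩ := (blockPerm (-(m + 2)) (m - k) k).surjective l
  have := hτ x
  have := hτ (τ x)
  have := τ.apply_apply x
  have := harc x
  have := τ.apply_ne x
  rw [smul_apply_apply]
  rw [hπ] at hl
  rw [hπ, hπ]
  grind

lemma blockPerm_smul_apply_last_ne (hkm : k ≤ m) (hτ : ∀ l : ℤ, m < l → τ l = -1 - l)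
    (harc : ∀ l : ℤ, k ≤ l → τ l ≠ l + 1) :
    (blockPerm (-(m + 2)) (m - k) k • τ) (m + 1) ≠ -(m + 2) := by
  have hπ := blockPerm_sub_apply hkm
  have hp : blockPerm (-(m + 2)) (m - k) k m = -(m + 2) := by
    rw [hπ]
    grind
  intro h
  have hm : (blockPerm (-(m + 2)) (m - k) k • τ) (blockPerm (-(m + 2)) (m - k) k m) = m + 1 := by
    rw [hp, (apply_eq_iff _).1 h]
  rw [smul_apply_apply, hπ] at hm
  have := hτ (m + 1)
  have := τ.apply_eq_iff (x := m) (y := m - 1)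
  have := τ.apply_eq_iff (x := m) (y := m + 1)
  have := τ.apply_ne m
  have := harc (m - 1)
  grind

end BlockPerm

section NormalWords

variable {m j : ℕ} {w w' : List ℕ}

lemma act_rainbow_apply_ne_succ (hw : w ∈ normalWords m j) {l : ℤ} (hl : j ≤ l) :
    act w rainbow l ≠ l + 1 := by
  induction m generalizing j w l with
  | zero =>
    rw [normalWords, mem_singleton] at hw
    subst hw
    have := rainbow_apply l
    change rainbow l ≠ l + 1
    omega
  | succ m ih =>
    rcases mem_normalWords_succ.1 hw with hw | ⟨k, hkj, hkm, w', hw', rfl⟩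
    · exact ih hw hl
    · rw [act_range'_append_rainbow hkm hw']
      exact blockPerm_smul_apply_ne_succ hkm (fun _ => act_rainbow_apply_of_mem hw')
        (fun _ => ih hw') (by omega)

lemma act_range'_append_rainbow_ne {k : ℕ} (hkm : k ≤ m) (hw' : w' ∈ normalWords m k)
    (hw : w ∈ normalWords m j) :
    act (List.range' k (m + 1 - k) ++ w') rainbow ≠ act w rainbow := by
  intro e
  have hfar : act w rainbow (m + 1) = -(m + 2) := by
    rw [act_rainbow_apply_of_mem hw (by omega)]
    ring
  rw [← e, act_range'_append_rainbow hkm hw'] at hfar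
  exact blockPerm_smul_apply_last_ne hkm (fun _ => act_rainbow_apply_of_mem hw')
    (fun _ => act_rainbow_apply_ne_succ hw') hfar

-- The last arc joining neighbours `l` and `l + 1` with `0 ≤ l` determines the first letter.
lemma act_range'_append_rainbow_ne_of_lt {k l : ℕ} (hkl : k < l) (hlm : l ≤ m)
    (hw : w ∈ normalWords m k) (hw' : w' ∈ normalWords m l) :
    act (List.range' k (m + 1 - k) ++ w) rainbow ≠
      act (List.range' l (m + 1 - l) ++ w') rainbow := by
  intro e
  have hl : act (List.range' l (m + 1 - l) ++ w') rainbow l = l + 1 := by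
    rw [act_range'_append_rainbow hlm hw']
    exact blockPerm_smul_apply_self hlm fun _ => act_rainbow_apply_of_mem hw'
  exact act_rainbow_apply_ne_succ (m := m + 1) (j := k + 1)
    (mem_normalWords_succ.2 (Or.inr ⟨k, by omega, by omega, w, hw, rfl⟩)) (by omega) (e ▸ hl)

lemma act_rainbow_injOn (m j : ℕ) :
    Set.InjOn (act · rainbow) (normalWords m j : Set (List ℕ)) := by
  induction m generalizing j with
  | zero => simp [normalWords]
  | succ m ih =>
    intro w hw w' hw' e
    rw [mem_coe, mem_normalWords_succ] at hw hw'
    rcases hw with hw | ⟨k, -, hkm, v, hv, rfl⟩ <;>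
      rcases hw' with hw' | ⟨l, -, hlm, v', hv', rfl⟩
    · exact ih j hw hw' e
    · exact absurd e.symm (act_range'_append_rainbow_ne hlm hv' hw)
    · exact absurd e (act_range'_append_rainbow_ne hkm hv hw')
    · obtain rfl : k = l := by
        rcases lt_trichotomy k l with h | h | h
        · exact absurd e (act_range'_append_rainbow_ne_of_lt h hlm hv hv')
        · exact h
        · exact absurd e.symm (act_range'_append_rainbow_ne_of_lt h hkm hv' hv)
      simp only [act_range'_append_rainbow hkm hv, act_range'_append_rainbow hkm hv'] at e
      rw [ih k hv hv' (MulAction.injective _ e)]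

end NormalWords
end Matching

section Representation

open Matching

section CommSemiring

variable {L : Type*} [CommSemiring L] {s : L} {i j : ℤ} {σ : Matching ℤ}

/-- The coefficient with which the Temperley–Lieb generator joining `i` and `i + 1` acts on a
matching, for the loop parameter `s ^ 2 + 1`. -/
def weight (s : L) (i : ℤ) (σ : Matching ℤ) : L := if σ i = i + 1 then s ^ 2 + 1 else s

/-- The action of the Temperley–Lieb generators on the free module on the matchings of `ℤ`. -/
noncomputable def matchingRep (s : L) (i : ℕ) : Module.End L (Matching ℤ →₀ L) :=
  Finsupp.linearCombination L fun σ => Finsupp.single (connect (i : ℤ) (i + 1) σ) (weight s i σ)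

lemma matchingRep_single (s : L) (i : ℕ) (σ : Matching ℤ) (a : L) :
    matchingRep s i (Finsupp.single σ a) =
      Finsupp.single (connect (i : ℤ) (i + 1) σ) (weight s i σ * a) := by
  rw [matchingRep, Finsupp.linearCombination_single, Finsupp.smul_single, smul_eq_mul, mul_comm]

lemma weight_of_eq (h : σ i = i + 1) : weight s i σ = s ^ 2 + 1 := if_pos h

lemma weight_of_ne (h : σ i ≠ i + 1) : weight s i σ = s := if_neg h

lemma weight_connect_self : weight s i (connect i (i + 1) σ) = s ^ 2 + 1 :=
  weight_of_eq (connect_apply_left (by omega) σ)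

lemma weight_connect_succ : weight s i (connect (i + 1) (i + 1 + 1) σ) = s := by
  refine weight_of_ne fun h => ?_
  rw [apply_eq_iff, connect_apply_left (by omega)] at h
  omega

lemma weight_succ_connect : weight s (i + 1) (connect i (i + 1) σ) = s := by
  refine weight_of_ne ?_
  rw [connect_apply_right (by omega)]
  omega

lemma weight_connect_mul_weight (hij : i + 1 < j) :
    weight s i (connect j (j + 1) σ) * weight s j σ =
      weight s j (connect i (i + 1) σ) * weight s i σ := by
  have hi := connect_apply_eq_iff (a := i) (b := i + 1) (c := j) (d := j + 1) (σ := σ)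
    (by omega) (by omega) (by omega) (by omega) (by omega) (by omega)
  have hj := connect_apply_eq_iff (a := j) (b := j + 1) (c := i) (d := i + 1) (σ := σ)
    (by omega) (by omega) (by omega) (by omega) (by omega) (by omega)
  have := σ.apply_apply i
  have := σ.apply_apply (i + 1)
  have := σ.apply_apply j
  have := σ.apply_apply (j + 1)
  simp only [weight, hi, hj]
  split_ifs <;> grind

lemma relations_matchingRep (n : ℕ) (s : L) : Relations n (s ^ 2) (matchingRep s) := by
  refine ⟨fun i _ => ?_, fun i _ => ?_, fun i _ => ?_, fun i j hij _ => ?_⟩ <;>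
    refine Finsupp.lhom_ext fun σ a => ?_ <;>
    simp only [Module.End.mul_apply, LinearMap.smul_apply, matchingRep_single,
      Finsupp.smul_single, smul_eq_mul, Nat.cast_add, Nat.cast_one]
  · rw [connect_eq_self (connect_apply_left (by omega) σ), weight_connect_self]
  · rw [connect_connect (by omega) (connect_apply_left (by omega) σ), weight_connect_succ,
      weight_succ_connect, ← mul_assoc, ← pow_two]
  · rw [weight_succ_connect, weight_connect_succ, connect_symm (a := (i : ℤ)) (by omega),
      connect_symm (a := (i : ℤ) + 1) (by omega) (connect _ _ _),
      connect_connect (by omega) (connect_apply_right (by omega) σ), ← mul_assoc, ← pow_two]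
  · rw [connect_comm (by omega) (by omega) (by omega) (by omega) (by omega) (by omega),
      ← mul_assoc, ← mul_assoc, weight_connect_mul_weight (by omega)]

lemma Relations.of_algebraMap {F A : Type*} [CommSemiring F] [Algebra F L] [Semiring A]
    [Algebra L A] [Algebra F A] [IsScalarTower F L A] {n : ℕ} {u : F} {V : ℕ → A}
    (h : Relations n (algebraMap F L u) V) : Relations n u V := by
  have hu (a : F) (x : A) : algebraMap F L a • x = a • x := algebraMap_smul L a x
  refine ⟨fun i hi => ?_, fun i hi => ?_, fun i hi => ?_, h.comm⟩
  · rw [h.sq i hi, ← map_one (algebraMap F L), ← map_add, hu]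
  · rw [h.up i hi, hu]
  · rw [h.down i hi, hu]

end CommSemiring

section Field

variable {L : Type*} [Field L] {s : L}

lemma weight_ne_zero (hs : s ≠ 0) (hs' : s ^ 2 + 1 ≠ 0) (i : ℤ) (σ : Matching ℤ) :
    weight s i σ ≠ 0 := by
  unfold weight
  split_ifs <;> assumption

lemma exists_prod_matchingRep_single_rainbow (hs : s ≠ 0) (hs' : s ^ 2 + 1 ≠ 0) (w : List ℕ) :
    ∃ c ≠ 0, (w.map (matchingRep s)).prod (Finsupp.single rainbow 1) =
      Finsupp.single (act w rainbow) c := by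
  induction w with
  | nil => exact ⟨1, one_ne_zero, rfl⟩
  | cons i w ih =>
    obtain ⟨c, hc, e⟩ := ih
    refine ⟨weight s i (act w rainbow) * c, mul_ne_zero (weight_ne_zero hs hs' _ _) hc, ?_⟩
    rw [List.map_cons, List.prod_cons, Module.End.mul_apply, e, matchingRep_single, act_cons]

lemma linearIndependent_prod_matchingRep (hs : s ≠ 0) (hs' : s ^ 2 + 1 ≠ 0) (m : ℕ) :
    LinearIndependent L fun w : normalWords m m => (w.1.map (matchingRep s)).prod := by
  choose c hc e using exists_prod_matchingRep_single_rainbow hs hs'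
  refine LinearIndependent.of_comp (LinearMap.applyₗ (Finsupp.single rainbow (1 : L))) ?_
  have hsingle : LinearIndependent L fun σ : Matching ℤ => Finsupp.single σ (1 : L) :=
    Finsupp.linearIndependent_single_of_ne_zero fun _ => one_ne_zero
  have hinj : Function.Injective fun w : normalWords m m => act w.1 rainbow :=
    fun w w' h => Subtype.ext (act_rainbow_injOn m m w.2 w'.2 h)
  convert (hsingle.comp _ hinj).units_smul fun w => Units.mk0 _ (hc w.1) using 1
  ext w : 1
  simp [e, Units.smul_def]

-- A square root of `u` makes the relations symmetric under exchanging the ends of an arc.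
lemma exists_relations_linearIndependent.{w} {F : Type w} [Field F] {u : F} (hu : u ≠ 0)
    (hu' : u + 1 ≠ 0) : ∃ (B : Type w) (_ : Ring B) (_ : Algebra F B) (V : ℕ → B),
      (∀ n, Relations n u V) ∧
        ∀ m, LinearIndependent F fun w : normalWords m m => (w.1.map V).prod := by
  obtain ⟨s, hs⟩ := IsAlgClosed.exists_pow_nat_eq (algebraMap F (AlgebraicClosure F) u) two_pos
  refine ⟨Module.End (AlgebraicClosure F) (Matching ℤ →₀ AlgebraicClosure F), inferInstance,
    inferInstance, matchingRep s, fun n => Relations.of_algebraMap (hs ▸ relations_matchingRep n s),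
    fun m => (linearIndependent_prod_matchingRep ?_ ?_ m).restrict_scalars
      (smul_left_injective F one_ne_zero)⟩
  · rintro rfl
    exact hu ((map_eq_zero _).1 (by rw [← hs, zero_pow two_ne_zero]))
  · rw [hs, ← map_one (algebraMap F _), ← map_add]
    exact (map_ne_zero _).2 hu'

end Field
end Representation

end TemperleyLieb

namespace YokonumaTL

open Equiv Finset Function Polynomial
open scoped Pointwise

noncomputable section

section EigenIdem

variable {ι F A M : Type*} [Fintype ι] [DecidableEq ι] [Field F] [Ring A] [Algebra F A]
  [AddCommGroup M] [Module F M] [Module A M] [IsScalarTower F A M] {v : ι → F}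

/-- The value at `x` of the Lagrange basis polynomial that is `1` at the node `v a` and `0` at the
other nodes: the projection to the `v a`-eigenspace of `x`, if `x` is annihilated by
`∏ b, (X - v b)`. -/
def eigenIdem (v : ι → F) (x : A) (a : ι) : A := aeval x (Lagrange.basis univ v a)

lemma aeval_smul_of_smul_eq {x : A} {c : F} {y : M} (h : x • y = c • y) (p : F[X]) :
    aeval x p • y = p.eval c • y := by
  induction p using Polynomial.induction_on' with
  | add p q hp hq => simp only [map_add, add_smul, hp, hq, eval_add]
  | monomial k b =>
    induction k with
    | zero => simp
    | succ k ih =>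
      rw [← monomial_mul_X, map_mul, aeval_X, mul_smul, h, smul_algebra_smul_comm, ih, smul_smul,
        eval_mul_X, mul_comm]

lemma eigenIdem_smul (hv : Injective v) {x : A} {a b : ι} {y : M} (h : x • y = v b • y) :
    eigenIdem v x a • y = if b = a then y else 0 := by
  rw [eigenIdem, aeval_smul_of_smul_eq h]
  split_ifs with hab
  · rw [hab, Lagrange.eval_basis_self hv.injOn (mem_univ a), one_smul]
  · rw [Lagrange.eval_basis_of_ne (Ne.symm hab) (mem_univ b), zero_smul]

lemma sum_eigenIdem [Nonempty ι] (hv : Injective v) (x : A) : ∑ a, eigenIdem v x a = 1 := by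
  simp only [eigenIdem]
  rw [← map_sum, Lagrange.sum_basis hv.injOn univ_nonempty, map_one]

lemma mul_eigenIdem {x : A} (hx : aeval x (Lagrange.nodal univ v) = 0) (a : ι) :
    x * eigenIdem v x a = v a • eigenIdem v x a := by
  have h : (X - C (v a)) * Lagrange.basis univ v a =
      C (Lagrange.nodalWeight univ v a) * Lagrange.nodal univ v := by
    rw [Lagrange.basis_eq_prod_sub_inv_mul_nodal_div (mem_univ a), mul_left_comm,
      ← Lagrange.nodal_erase_eq_nodal_div (mem_univ a),
      ← Lagrange.nodal_eq_mul_nodal_erase (mem_univ a)]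
  have := congrArg (aeval x) h
  rwa [map_mul, map_mul, hx, mul_zero, map_sub, aeval_X, aeval_C, sub_mul, sub_eq_zero,
    ← Algebra.smul_def] at this

lemma commute_eigenIdem {x y : A} (h : Commute x y) (a : ι) : Commute x (eigenIdem v y a) := by
  rw [eigenIdem, aeval_eq_sum_range]
  exact Commute.sum_right _ _ _ fun k _ => (h.pow_right k).smul_right _

lemma map_eigenIdem {B : Type*} [Ring B] [Algebra F B] (φ : A →ₐ[F] B) (x : A) (a : ι) :
    φ (eigenIdem v x a) = eigenIdem v (φ x) a :=
  (aeval_algHom_apply φ x _).symm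

end EigenIdem

section Weights

variable {ι F A M : Type*} [Field F] [Ring A] [Algebra F A] [AddCommGroup M] [Module F M]
  [Module A M] [IsScalarTower F A M] {n m : ℕ} {v : ι → F} {t : ℕ → A} {χ χ' : ℕ → ι}

/-- The vector `y` is a simultaneous eigenvector of `t 0, …, t (n - 1)` with eigenvalues
`v (χ 0), …, v (χ (n - 1))`. -/
def HasWeight (n : ℕ) (v : ι → F) (t : ℕ → A) (χ : ℕ → ι) (y : M) : Prop :=
  ∀ p < n, t p • y = v (χ p) • y

/-- The projection to the simultaneous eigenspace of `t 0, …, t (m - 1)` of weight `χ`, where `m` is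
the last argument. -/
def weightIdem [Fintype ι] [DecidableEq ι] (v : ι → F) (t : ℕ → A) (χ : ℕ → ι) : ℕ → A
  | 0 => 1
  | m + 1 => eigenIdem v (t m) (χ m) * weightIdem v t χ m

/-- The extension to `ℕ` of a weight given on the first `n` positions. -/
def extendWeight [Inhabited ι] (χ : Fin n → ι) : ℕ → ι := extend Fin.val χ default

lemma extendWeight_apply [Inhabited ι] (χ : Fin n → ι) (p : Fin n) : extendWeight χ p = χ p :=
  Fin.val_injective.extend_apply χ _ p

variable [Fintype ι] [DecidableEq ι]

lemma HasWeight.weightIdem_smul (hv : Injective v) {y : M} (hy : HasWeight n v t χ y)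
    (hm : m ≤ n) (h : ∀ p < m, χ p = χ' p) : weightIdem v t χ' m • y = y := by
  induction m with
  | zero => exact one_smul A y
  | succ m ih =>
    rw [weightIdem, mul_smul, ih (by omega) fun p hp => h p (by omega),
      eigenIdem_smul hv (hy m (by omega)), if_pos (h m (by omega))]

lemma HasWeight.weightIdem_smul_eq_zero (hv : Injective v) {y : M} (hy : HasWeight n v t χ y)
    (hm : m ≤ n) (h : ∃ p < m, χ p ≠ χ' p) : weightIdem v t χ' m • y = 0 := by
  induction m with
  | zero => simp at h
  | succ m ih =>
    rw [weightIdem, mul_smul]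
    by_cases h' : ∃ p < m, χ p ≠ χ' p
    · rw [ih (by omega) h', smul_zero]
    · push Not at h'
      obtain ⟨p, hp, hne⟩ := h
      obtain rfl : p = m := by
        by_contra hpm
        exact hne (h' p (by omega))
      rw [hy.weightIdem_smul hv (by omega) h', eigenIdem_smul hv (hy p (by omega)), if_neg hne]

lemma weightIdem_congr (h : ∀ p < m, χ p = χ' p) : weightIdem v t χ m = weightIdem v t χ' m := by
  induction m with
  | zero => rfl
  | succ m ih => rw [weightIdem, weightIdem, ih fun p hp => h p (by omega), h m (by omega)]

lemma map_weightIdem {B : Type*} [Ring B] [Algebra F B] {φ : A →ₐ[F] B} {t' : ℕ → B}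
    (ht : ∀ p < n, φ (t p) = t' p) (χ : ℕ → ι) (hm : m ≤ n) :
    φ (weightIdem v t χ m) = weightIdem v t' χ m := by
  induction m with
  | zero => exact map_one φ
  | succ m ih => rw [weightIdem, weightIdem, map_mul, ih (by omega), map_eigenIdem, ht m (by omega)]

lemma weightIdem_extendWeight_snoc [Inhabited ι] (χ : Fin m → ι) (a : ι) :
    weightIdem v t (extendWeight (Fin.snoc (α := fun _ => ι) χ a)) (m + 1) =
      eigenIdem v (t m) a * weightIdem v t (extendWeight χ) m := by
  rw [weightIdem]
  congr 1
  · congr 1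
    simpa using extendWeight_apply (Fin.snoc (α := fun _ => ι) χ a) (Fin.last m)
  · refine weightIdem_congr fun p hp => ?_
    have h := extendWeight_apply (Fin.snoc (α := fun _ => ι) χ a) (Fin.castSucc ⟨p, hp⟩)
    rw [Fin.snoc_castSucc, ← extendWeight_apply χ] at h
    exact h

lemma sum_weightIdem [Inhabited ι] (hv : Injective v) (t : ℕ → A) (m : ℕ) :
    ∑ χ : Fin m → ι, weightIdem v t (extendWeight χ) m = 1 := by
  induction m with
  | zero => simp [weightIdem]
  | succ m ih =>
    rw [← (Fin.snocEquiv fun _ => ι).sum_comp, Fintype.sum_prod_type]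
    simp only [Fin.snocEquiv, Equiv.coe_fn_mk, weightIdem_extendWeight_snoc, ← mul_sum, ih, mul_one,
      sum_eigenIdem hv]

lemma hasWeight_weightIdem (ht : ∀ p < n, ∀ q < n, Commute (t p) (t q))
    (hnodal : ∀ p < n, aeval (t p) (Lagrange.nodal univ v) = 0) (χ : ℕ → ι) (hm : m ≤ n) :
    HasWeight m v t χ (weightIdem v t χ m) := by
  induction m with
  | zero => exact fun p hp => absurd hp p.not_lt_zero
  | succ m ih =>
    intro p hp
    rw [weightIdem, smul_eq_mul, ← mul_assoc]
    rcases Nat.lt_succ_iff_lt_or_eq.1 hp with hpm | rfl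
    · rw [(commute_eigenIdem (ht p (by omega) m (by omega)) _).eq, mul_assoc, ← smul_eq_mul (t p),
        ih (by omega) p hpm, mul_smul_comm]
    · rw [mul_eigenIdem (hnodal p (by omega)), smul_mul_assoc]

lemma weightIdem_mul_self (hv : Injective v) (h : HasWeight n v t χ (weightIdem v t χ n)) :
    weightIdem v t χ n * weightIdem v t χ n = weightIdem v t χ n :=
  h.weightIdem_smul hv le_rfl fun _ _ => rfl

lemma completeOrthogonalIdempotents_weightIdem [Inhabited ι] (hv : Injective v)
    (h : ∀ χ, HasWeight n v t χ (weightIdem v t χ n)) :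
    CompleteOrthogonalIdempotents fun χ : Fin n → ι => weightIdem v t (extendWeight χ) n where
  idem χ := weightIdem_mul_self hv (h _)
  ortho χ χ' hne := by
    obtain ⟨p, hp⟩ := Function.ne_iff.1 hne
    refine (h (extendWeight χ')).weightIdem_smul_eq_zero hv le_rfl ⟨p, p.2, ?_⟩
    rw [extendWeight_apply, extendWeight_apply]
    exact hp.symm
  complete := sum_weightIdem hv t n

end Weights

section LeftIdeal

variable {F A : Type*} [Field F] [Ring A] [Algebra F A] {e f : A}

variable (F) in
/-- The left ideal `A e`, as a subspace. -/
def leftIdeal (e : A) : Submodule F A := LinearMap.range (LinearMap.mulRight F e)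

lemma mem_leftIdeal {x : A} : x ∈ leftIdeal F e ↔ ∃ y, y * e = x := Iff.rfl

lemma mul_mem_leftIdeal (x e : A) : x * e ∈ leftIdeal F e := ⟨x, rfl⟩

lemma mul_eq_self_of_mem_leftIdeal {x : A} (he : e * e = e) (hx : x ∈ leftIdeal F e) :
    x * e = x := by
  obtain ⟨y, rfl⟩ := mem_leftIdeal.1 hx
  rw [mul_assoc, he]

variable (F) in
/-- A complete family of orthogonal idempotents decomposes an algebra into left ideals. -/
def equivPiLeftIdeal {ι : Type*} [Fintype ι] {e : ι → A} (he : CompleteOrthogonalIdempotents e) :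
    A ≃ₗ[F] (i : ι) → leftIdeal F (e i) where
  toFun x i := ⟨x * e i, mul_mem_leftIdeal x (e i)⟩
  invFun y := ∑ i, (y i : A)
  map_add' x y := by ext i; simp [add_mul]
  map_smul' a x := by ext i; simp
  left_inv x := by simp [← mul_sum, he.complete]
  right_inv y := by
    ext i
    change (∑ j, (y j : A)) * e i = y i
    rw [sum_mul, sum_eq_single i]
    · exact mul_eq_self_of_mem_leftIdeal (he.idem i) (y i).2
    · intro j _ hj
      rw [← mul_eq_self_of_mem_leftIdeal (he.idem j) (y j).2, mul_assoc, he.ortho hj, mul_zero]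
    · simp

lemma finiteDimensional_of_leftIdeal {ι : Type*} [Fintype ι] {e : ι → A}
    (he : CompleteOrthogonalIdempotents e) [∀ i, FiniteDimensional F (leftIdeal F (e i))] :
    FiniteDimensional F A :=
  (equivPiLeftIdeal F he).symm.finiteDimensional

lemma finrank_eq_sum_leftIdeal {ι : Type*} [Fintype ι] {e : ι → A}
    (he : CompleteOrthogonalIdempotents e) [∀ i, FiniteDimensional F (leftIdeal F (e i))] :
    Module.finrank F A = ∑ i, Module.finrank F (leftIdeal F (e i)) := by
  rw [(equivPiLeftIdeal F he).finrank_eq, Module.finrank_pi_fintype]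

variable (F) in
/-- The isomorphism of left ideals given by a Murray–von Neumann equivalence `e = a * b`,
`f = b * a` of idempotents, with `a = a * f` and `b = b * e`. -/
def leftIdealEquiv {a b : A} (ha : a * f = a) (hb : b * e = b) (hab : a * b = e) (hba : b * a = f) :
    leftIdeal F e ≃ₗ[F] leftIdeal F f where
  toFun x := ⟨x * a, by rw [← ha, ← mul_assoc]; exact mul_mem_leftIdeal _ f⟩
  invFun x := ⟨x * b, by rw [← hb, ← mul_assoc]; exact mul_mem_leftIdeal _ e⟩
  map_add' x y := Subtype.ext (add_mul _ _ _)
  map_smul' c x := Subtype.ext (smul_mul_assoc _ _ _)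
  left_inv x := Subtype.ext <| by
    have he : e * e = e := by nth_rw 1 [← hab]; rw [mul_assoc, hb, hab]
    simp only [mul_assoc, hab, mul_eq_self_of_mem_leftIdeal he x.2]
  right_inv x := Subtype.ext <| by
    have hf : f * f = f := by nth_rw 1 [← hba]; rw [mul_assoc, ha, hba]
    simp only [mul_assoc, hba, mul_eq_self_of_mem_leftIdeal hf x.2]

end LeftIdeal

/-- The transposition `(i, i + 1)` of `ℕ`. -/
abbrev sw (i : ℕ) : Perm ℕ := swap i (i + 1)

lemma sw_lt {n i p : ℕ} (hi : i + 1 < n) (hp : p < n) : sw i p < n := by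
  rw [swap_apply_def]
  split_ifs <;> omega

lemma sw_apply_of_ne {i p : ℕ} (h : p ≠ i) (h' : p ≠ i + 1) : sw i p = p :=
  swap_apply_of_ne_of_ne h h'

lemma comp_sw_eq_self {ι : Type*} {χ : ℕ → ι} {i : ℕ} (h : χ i = χ (i + 1)) : χ ∘ sw i = χ := by
  ext p
  simp only [comp_apply, swap_apply_def]
  split_ifs <;> simp_all

section RootPow

variable {F : Type*} [Field F] {d : ℕ} {ζ : F}

/-- The `d`-th roots of unity `1, ζ, …, ζ ^ (d - 1)`, as eigenvalues indexed by `Fin d`. -/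
def rootPow (ζ : F) (a : Fin d) : F := ζ ^ (a : ℕ)

lemma rootPow_injective (hζ : IsPrimitiveRoot ζ d) :
    Injective (rootPow ζ : Fin d → F) := fun a b h => Fin.ext (hζ.pow_inj a.2 b.2 h)

lemma rootPow_pow (hζ : IsPrimitiveRoot ζ d) (a : Fin d) : rootPow ζ a ^ d = 1 := by
  rw [rootPow, pow_right_comm, hζ.pow_eq_one, one_pow]

lemma nodal_rootPow [NeZero d] (hζ : IsPrimitiveRoot ζ d) :
    Lagrange.nodal univ (rootPow ζ : Fin d → F) = X ^ d - 1 := by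
  have hmem : ∀ a ∈ (univ : Finset (Fin d)), rootPow ζ a ∈ nthRootsFinset d (1 : F) := fun a _ =>
    (mem_nthRootsFinset (NeZero.pos d) 1).2 (rootPow_pow hζ a)
  rw [X_pow_sub_one_eq_prod (NeZero.pos d) hζ, Lagrange.nodal]
  refine prod_nbij (rootPow ζ) hmem (rootPow_injective hζ).injOn
    (surjOn_of_injOn_of_card_le _ hmem (rootPow_injective hζ).injOn ?_) fun _ _ => rfl
  rw [hζ.card_nthRootsFinset, card_univ, Fintype.card_fin]

end RootPow

section Relations

variable {F A M : Type*} [Field F] [Ring A] [Algebra F A] [AddCommGroup M] [Module F M]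
  [Module A M] [IsScalarTower F A M] {d n : ℕ} {t : ℕ → A}

variable (F) in
/-- The element `e_i = (1/d) ∑ s < d, t_i ^ s * t_{i+1} ^ (d - s)`. -/
def eElt (d : ℕ) (t : ℕ → A) (i : ℕ) : A :=
  (d : F)⁻¹ • ∑ s ∈ range d, t i ^ s * t (i + 1) ^ (d - s)

/-- The relations of the Yokonuma–Temperley–Lieb algebra, with indices shifted so that the
generators are `g 0, …, g (n - 2)` and `t 0, …, t (n - 1)`. -/
structure YTLRelations (d n : ℕ) (u : F) (g t : ℕ → A) : Prop where
  comm : ∀ i j, i + 1 < j → j + 1 < n → Commute (g i) (g j)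
  braid : ∀ i, i + 2 < n → g i * g (i + 1) * g i = g (i + 1) * g i * g (i + 1)
  tcomm : ∀ p < n, ∀ q < n, Commute (t p) (t q)
  tg : ∀ i p, i + 1 < n → p < n → t p * g i = g i * t (sw i p)
  tpow : ∀ p < n, t p ^ d = 1
  quad : ∀ i, i + 1 < n →
    g i * g i = 1 + (u - 1) • eElt F d t i + (u - 1) • (eElt F d t i * g i)
  tl : ∀ i, i + 2 < n →
    g i * g (i + 1) * g i + g i * g (i + 1) + g (i + 1) * g i + g i + g (i + 1) + 1 = 0

lemma pow_smul_of_smul_eq {x : A} {c : F} {y : M} (h : x • y = c • y) (s : ℕ) :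
    x ^ s • y = c ^ s • y := by
  simpa using aeval_smul_of_smul_eq h (X ^ s)

lemma eElt_smul {c c' : F} {i : ℕ} {y : M} (h : t i • y = c • y) (h' : t (i + 1) • y = c' • y) :
    eElt F d t i • y = ((d : F)⁻¹ * ∑ s ∈ range d, c ^ s * c' ^ (d - s)) • y := by
  rw [eElt, smul_assoc, mul_smul, sum_smul, sum_smul]
  congr 1
  refine sum_congr rfl fun s _ => ?_
  rw [mul_smul, pow_smul_of_smul_eq h', smul_algebra_smul_comm, pow_smul_of_smul_eq h, smul_smul,
    mul_comm]

lemma eElt_smul_of_eq (hd : (d : F) ≠ 0) {c : F} (hc : c ^ d = 1) {i : ℕ} {y : M}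
    (h : t i • y = c • y) (h' : t (i + 1) • y = c • y) : eElt F d t i • y = y := by
  have hs : ∑ s ∈ range d, c ^ s * c ^ (d - s) = d := by
    rw [sum_congr rfl fun s hs => by rw [← pow_add, Nat.add_sub_of_le (mem_range.1 hs).le, hc]]
    simp
  rw [eElt_smul h h', hs, inv_mul_cancel₀ hd, one_smul]

lemma eElt_smul_of_ne {c c' : F} (hc : c ^ d = 1) (hc' : c' ^ d = 1) (hne : c ≠ c') {i : ℕ} {y : M}
    (h : t i • y = c • y) (h' : t (i + 1) • y = c' • y) : eElt F d t i • y = 0 := by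
  have hs : ∑ s ∈ range d, c ^ s * c' ^ (d - s) = c' * ∑ s ∈ range d, c ^ s * c' ^ (d - 1 - s) := by
    rw [mul_sum]
    refine sum_congr rfl fun s hs => ?_
    rw [mul_left_comm, ← pow_succ', show d - s = d - 1 - s + 1 by have := mem_range.1 hs; omega]
  have hg : ∑ s ∈ range d, c ^ s * c' ^ (d - 1 - s) = 0 := by
    have := (Commute.all c c').geom_sum₂_mul d
    rw [hc, hc', sub_self] at this
    exact (mul_eq_zero.1 this).resolve_right (sub_ne_zero.2 hne)
  rw [eElt_smul h h', hs, hg, mul_zero, mul_zero, zero_smul]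

end Relations

namespace YTLRelations

variable {F A M : Type*} [Field F] [Ring A] [Algebra F A] [AddCommGroup M] [Module F M]
  [Module A M] [IsScalarTower F A M] {d n : ℕ} {ζ u : F} {g t : ℕ → A} {χ : ℕ → Fin d} {y : M}
  (h : YTLRelations d n u g t) (hζ : IsPrimitiveRoot ζ d)

include h

lemma hasWeight_smul {ι : Type*} {v : ι → F} {χ : ℕ → ι} (hy : HasWeight n v t χ y) {i : ℕ}
    (hi : i + 1 < n) : HasWeight n v t (χ ∘ sw i) (g i • y) := fun p hp => by
  rw [← mul_smul, h.tg i p hi hp, mul_smul, hy _ (sw_lt hi hp), smul_algebra_smul_comm, comp_apply]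

include hζ

lemma hasWeight_weightIdem [NeZero d] (χ : ℕ → Fin d) :
    HasWeight n (rootPow ζ) t χ (weightIdem (rootPow ζ) t χ n) :=
  YokonumaTL.hasWeight_weightIdem h.tcomm
    (fun p hp => by simp [nodal_rootPow hζ, h.tpow p hp]) χ le_rfl

section Weights

variable (hy : HasWeight n (rootPow ζ) t χ y)

include hy

lemma g_smul_g_smul_of_eq [NeZero d] {i : ℕ} (hi : i + 1 < n) (hχ : χ i = χ (i + 1)) :
    g i • g i • y = u • y + (u - 1) • g i • y := by
  have hd : (d : F) ≠ 0 := hζ.neZero'.out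
  have hw := h.hasWeight_smul hy hi
  rw [comp_sw_eq_self hχ] at hw
  rw [← mul_smul, h.quad i hi, add_smul, add_smul, one_smul, smul_assoc, smul_assoc, mul_smul,
    eElt_smul_of_eq hd (rootPow_pow hζ _) (hy i (by omega)) (hχ ▸ hy (i + 1) hi),
    eElt_smul_of_eq hd (rootPow_pow hζ _) (hw i (by omega)) (hχ ▸ hw (i + 1) hi), sub_smul u,
    one_smul, add_sub_cancel]

lemma g_smul_g_smul_of_ne {i : ℕ} (hi : i + 1 < n) (hχ : χ i ≠ χ (i + 1)) : g i • g i • y = y := by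
  have hw := h.hasWeight_smul hy hi
  have he {a b : Fin d} (hab : a ≠ b) {y : M} := eElt_smul_of_ne (t := t) (i := i) (y := y)
    (rootPow_pow hζ a) (rootPow_pow hζ b) ((rootPow_injective hζ).ne hab)
  rw [← mul_smul, h.quad i hi, add_smul, add_smul, one_smul, smul_assoc, smul_assoc, mul_smul,
    he hχ (hy i (by omega)) (hy (i + 1) hi),
    he (by simpa using hχ.symm) (hw i (by omega)) (hw (i + 1) hi), smul_zero, add_zero, add_zero]

/-- The Temperley–Lieb relation on `y`, projected back to the weight space of `y`. -/
lemma add_weightIdem_smul {i : ℕ} (hi : i + 2 < n) (hχ : χ i ≠ χ (i + 2)) :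
    y + weightIdem (rootPow ζ) t χ n • g i • y +
      weightIdem (rootPow ζ) t χ n • g (i + 1) • y = 0 := by
  have hinj := rootPow_injective hζ
  have w₁ := h.hasWeight_smul hy (i := i) (by omega)
  have w₂ := h.hasWeight_smul hy (i := i + 1) (by omega)
  have w₁₂ := h.hasWeight_smul w₁ (i := i + 1) (by omega)
  have w₂₁ := h.hasWeight_smul w₂ (i := i) (by omega)
  have w₁₂₁ := h.hasWeight_smul w₁₂ (i := i) (by omega)
  have s₁ : sw i (i + 2) = i + 2 := sw_apply_of_ne (by omega) (by omega)
  have s₂ : sw (i + 1) i = i := sw_apply_of_ne (by omega) (by omega)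
  have s₃ : sw (i + 1) (i + 1) = i + 2 := swap_apply_left _ _
  have s₄ : sw (i + 1) (i + 2) = i + 1 := swap_apply_right _ _
  have z₂₁ : weightIdem (rootPow ζ) t χ n • g i • g (i + 1) • y = 0 :=
    w₂₁.weightIdem_smul_eq_zero hinj le_rfl ⟨i, by omega, by simpa [s₃] using hχ.symm⟩
  have z₁₂₁ : weightIdem (rootPow ζ) t χ n • g i • g (i + 1) • g i • y = 0 :=
    w₁₂₁.weightIdem_smul_eq_zero hinj le_rfl ⟨i, by omega, by simpa [s₁, s₃] using hχ.symm⟩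
  have z₁₂ : weightIdem (rootPow ζ) t χ n • g (i + 1) • g i • y = 0 :=
    w₁₂.weightIdem_smul_eq_zero hinj le_rfl ⟨i + 2, hi, by simpa [s₄] using hχ⟩
  have htl := congrArg (fun x => weightIdem (rootPow ζ) t χ n • x • y) (h.tl i hi)
  simp only [mul_smul, add_smul, smul_add, one_smul, zero_smul, smul_zero, z₂₁, z₁₂₁, z₁₂, zero_add,
    hy.weightIdem_smul hinj le_rfl fun _ _ => rfl] at htl
  rw [← htl]
  abel

lemma eq_zero_of_sw {i : ℕ} (hi : i + 1 < n)
    (h0 : ∀ y' : M, HasWeight n (rootPow ζ) t (χ ∘ sw i) y' → y' = 0) : y = 0 := by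
  by_cases hχ : χ i = χ (i + 1)
  · exact h0 y (by rwa [comp_sw_eq_self hχ])
  · rw [← h.g_smul_g_smul_of_ne hζ hy hi hχ, h0 _ (h.hasWeight_smul hy hi), smul_zero]

lemma weightIdem_smul_g_smul_of_ne {i : ℕ} (hi : i + 1 < n) (hχ : χ i ≠ χ (i + 1)) :
    weightIdem (rootPow ζ) t χ n • g i • y = 0 :=
  (h.hasWeight_smul hy hi).weightIdem_smul_eq_zero (rootPow_injective hζ) le_rfl
    ⟨i, by omega, by simpa using hχ.symm⟩

lemma weightIdem_smul_g_smul_of_eq {i : ℕ} (hi : i + 1 < n) (hχ : χ i = χ (i + 1)) :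
    weightIdem (rootPow ζ) t χ n • g i • y = g i • y :=
  (h.hasWeight_smul hy hi).weightIdem_smul (rootPow_injective hζ) le_rfl
    fun p _ => congrFun (comp_sw_eq_self hχ) p

lemma eq_zero_of_ne_of_ne_of_ne {p q r : ℕ} (hpq : p < q) (hqr : q < r) (hr : r < n)
    (h₁ : χ p ≠ χ q) (h₂ : χ q ≠ χ r) (h₃ : χ p ≠ χ r) : y = 0 := by
  induction hm : r - p using Nat.strong_induction_on generalizing p q r χ y with | _ m ih
  rcases (Nat.succ_le_of_lt hpq).lt_or_eq with hp | rfl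
  · refine h.eq_zero_of_sw hζ hy (i := p) (by omega) fun y' hy' =>
      ih (r - (p + 1)) (by omega) hy' hp hqr hr ?_ ?_ ?_ rfl <;>
    simpa [sw_apply_of_ne, show q ≠ p by omega, show r ≠ p by omega, show q ≠ p + 1 by omega,
      show r ≠ p + 1 by omega]
  rcases (Nat.succ_le_of_lt hqr).lt_or_eq with hq | rfl
  · obtain ⟨s, rfl⟩ : ∃ s, r = s + 1 := ⟨r - 1, by omega⟩
    refine h.eq_zero_of_sw hζ hy hr fun y' hy' =>
      ih (s - p) (by omega) hy' hpq (show p.succ < s by omega) (by omega) ?_ ?_ ?_ rfl <;>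
    simpa [sw_apply_of_ne, show p ≠ s by omega, show p ≠ s + 1 by omega, show p + 1 ≠ s by omega]
  · have := h.add_weightIdem_smul hζ hy hr h₃
    rwa [h.weightIdem_smul_g_smul_of_ne hζ hy (by omega) h₁,
      h.weightIdem_smul_g_smul_of_ne hζ hy hr h₂, add_zero, add_zero] at this

lemma g_smul_eq_neg_of_commute {i j : ℕ} (hj : j + 1 < n) (hij : Commute (g i) (g j))
    (hχ : χ j ≠ χ (j + 1)) (hneg : g i • g j • y = -(g j • y)) : g i • y = -y := by
  rw [← h.g_smul_g_smul_of_ne hζ hy hj hχ, ← mul_smul, hij.eq, mul_smul, hneg, smul_neg]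

lemma g_smul_eq_neg_of_lt {i p : ℕ} (hip : i + 2 ≤ p) (hp : p < n) (hχ : χ i = χ (i + 1))
    (hne : χ p ≠ χ i) : g i • y = -y := by
  induction p, hip using Nat.le_induction generalizing χ y with
  | base =>
    have := h.add_weightIdem_smul hζ hy hp hne.symm
    rwa [h.weightIdem_smul_g_smul_of_eq hζ hy (by omega) hχ,
      h.weightIdem_smul_g_smul_of_ne hζ hy hp (hχ ▸ hne.symm), add_zero, add_comm,
      add_eq_zero_iff_eq_neg] at this
  | succ p hip ih =>
    by_cases hpi : χ p = χ i
    · refine h.g_smul_eq_neg_of_commute hζ hy hp (h.comm i p hip hp) (hpi ▸ hne.symm)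
        (ih (h.hasWeight_smul hy hp) (by omega) ?_ ?_) <;>
      simpa [sw_apply_of_ne, show i ≠ p by omega, show i ≠ p + 1 by omega, show i + 1 ≠ p by omega]
    · exact ih hy (by omega) hχ hpi

lemma g_smul_eq_neg_of_gt {i p c : ℕ} (hc : p + c + 1 = i) (hi : i + 1 < n)
    (hχ : χ i = χ (i + 1)) (hne : χ p ≠ χ i) : g i • y = -y := by
  induction c generalizing p χ y with
  | zero =>
    obtain rfl : p + 1 = i := hc
    have := h.add_weightIdem_smul hζ hy hi (hχ ▸ hne)
    rwa [h.weightIdem_smul_g_smul_of_ne hζ hy (by omega) hne,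
      h.weightIdem_smul_g_smul_of_eq hζ hy hi hχ, add_zero, add_comm,
      add_eq_zero_iff_eq_neg] at this
  | succ c ih =>
    by_cases hpi : χ (p + 1) = χ i
    · refine h.g_smul_eq_neg_of_commute hζ hy (by omega) (h.comm p i (by omega) hi).symm
        (hpi ▸ hne) (ih (h.hasWeight_smul hy (by omega)) (p := p + 1) (by omega) ?_ ?_) <;>
      simpa [sw_apply_of_ne, show i ≠ p by omega, show i ≠ p + 1 by omega, show i + 1 ≠ p by omega]
    · exact ih hy (by omega) hχ hpi

lemma g_smul_eq_neg {i p : ℕ} (hi : i + 1 < n) (hp : p < n) (hχ : χ i = χ (i + 1))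
    (hne : χ p ≠ χ i) : g i • y = -y := by
  rcases lt_trichotomy p i with hpi | rfl | hip
  · obtain ⟨c, hc⟩ := Nat.exists_eq_add_of_lt hpi
    exact h.g_smul_eq_neg_of_gt hζ hy hc.symm hi hχ hne
  · exact absurd rfl hne
  · have hpi : p ≠ i + 1 := fun e => hne (e ▸ hχ.symm)
    exact h.g_smul_eq_neg_of_lt hζ hy (by omega) hp hχ hne

end Weights

end YTLRelations

section Sets

variable {i j k n : ℕ} {S : Finset ℕ}

lemma sw_commute (h : i + 1 < j) : Commute (sw i) (sw j) :=
  Perm.Disjoint.commute fun p => by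
    simp only [swap_apply_def]
    split_ifs <;> omega

lemma sw_mul_sw_mul_sw (i : ℕ) : sw i * sw (i + 1) * sw i = swap i (i + 2) := by
  ext p
  simp only [Perm.mul_apply, swap_apply_def]
  split_ifs <;> omega

lemma sw_braid (i : ℕ) : sw i * sw (i + 1) * sw i = sw (i + 1) * sw i * sw (i + 1) := by
  rw [sw_mul_sw_mul_sw, sw, sw, swap_mul_swap_mul_swap (by omega) (by omega), swap_comm]

lemma mem_swap_smul {p q r : ℕ} : r ∈ swap p q • S ↔ swap p q r ∈ S := by
  rw [← inv_smul_mem_iff, swap_inv, Perm.smul_def]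

lemma swap_smul_eq_self {p q : ℕ} (h : p ∈ S ↔ q ∈ S) : swap p q • S = S := by
  ext r
  rw [mem_swap_smul, swap_apply_def]
  split_ifs <;> simp_all

lemma sw_smul_sw_smul (i : ℕ) (S : Finset ℕ) : sw i • sw i • S = S := by
  rw [smul_smul, swap_mul_self, one_smul]

lemma sw_smul_subset_range (hi : i + 1 < n) (hS : S ⊆ range n) : sw i • S ⊆ range n := by
  intro p hp
  simpa using sw_lt hi (mem_range.1 (hS (mem_swap_smul.1 hp)))

lemma sw_smul_mem_powersetCard (hi : i + 1 < n) (hS : S ∈ powersetCard k (range n)) :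
    sw i • S ∈ powersetCard k (range n) := by
  rw [mem_powersetCard] at *
  exact ⟨sw_smul_subset_range hi hS.1, by rw [card_smul_finset, hS.2]⟩

lemma sum_sw_smul_lt (hi : i ∉ S) (hi' : i + 1 ∈ S) : ∑ p ∈ sw i • S, p < ∑ p ∈ S, p := by
  rw [smul_finset_def, sum_image (MulAction.injective _).injOn]
  refine sum_lt_sum (fun p hp => ?_) ⟨i + 1, hi', by simp⟩
  have : p ≠ i := fun e => hi (e ▸ hp)
  rw [Perm.smul_def, swap_apply_def]
  split_ifs <;> omega

lemma eq_range_card_of_no_descent (h : ∀ i, i + 1 ∈ S → i ∈ S) : S = range #S := by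
  have hdown : ∀ {p q}, q ≤ p → p ∈ S → q ∈ S := fun hqp =>
    Nat.le_induction id (fun p _ ih hp => ih (h p hp)) _ hqp
  refine eq_of_subset_of_card_le (fun p hp => mem_range.2 ?_) (by simp)
  have hp' : range (p + 1) ⊆ S := fun q hq => hdown (Nat.lt_succ_iff.1 (mem_range.1 hq)) hp
  simpa using card_le_card hp'

lemma descent_induction {P : Finset ℕ → Prop} (base : P (range k))
    (step : ∀ S ∈ powersetCard k (range n), ∀ i, i + 1 < n → i ∉ S → i + 1 ∈ S →
      P (sw i • S) → P S) :
    ∀ S ∈ powersetCard k (range n), P S := by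
  intro S hS
  induction hm : ∑ p ∈ S, p using Nat.strong_induction_on generalizing S with | _ m ih
  by_cases hdesc : ∃ i, i ∉ S ∧ i + 1 ∈ S
  · obtain ⟨i, hi, hi'⟩ := hdesc
    have hin : i + 1 < n := mem_range.1 ((mem_powersetCard.1 hS).1 hi')
    exact step S hS i hin hi hi'
      (ih _ (hm ▸ sum_sw_smul_lt hi hi') _ (sw_smul_mem_powersetCard hin hS) rfl)
  · push Not at hdesc
    rwa [eq_range_card_of_no_descent fun i hi => by_contra fun hi' => hdesc i hi' hi,
      (mem_powersetCard.1 hS).2]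

end Sets

section Orbit

variable {ι F A M : Type*} [Field F] [Ring A] [Algebra F A] [AddCommGroup M] [Module F M]
  [Module A M] [IsScalarTower F A M]

/-- The weight with value `a` on `S` and `b` elsewhere. -/
def twoValued (a b : ι) (S : Finset ℕ) (p : ℕ) : ι := if p ∈ S then a else b

lemma twoValued_sw_smul (a b : ι) (i : ℕ) (S : Finset ℕ) :
    twoValued a b (sw i • S) = twoValued a b S ∘ sw i := by
  ext p
  simp only [twoValued, mem_swap_smul, comp_apply]

lemma twoValued_eq_iff {a b : ι} (hab : a ≠ b) {S : Finset ℕ} {p q : ℕ} :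
    twoValued a b S p = twoValued a b S q ↔ (p ∈ S ↔ q ∈ S) := by
  unfold twoValued
  split_ifs <;> simp_all [eq_comm]

lemma exists_twoValued_ne {a b : ι} (hab : a ≠ b) {k n : ℕ} (hk : 0 < k) (hkn : k < n)
    {S : Finset ℕ} (hS : S ∈ powersetCard k (range n)) (i : ℕ) :
    ∃ p < n, twoValued a b S p ≠ twoValued a b S i := by
  obtain ⟨hSn, rfl⟩ := mem_powersetCard.1 hS
  simp only [ne_eq, twoValued_eq_iff hab]
  by_cases hi : i ∈ S
  · obtain ⟨q, hq, hqS⟩ := exists_mem_notMem_of_card_lt_card (by rwa [card_range] : #S < #(range n))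
    exact ⟨q, mem_range.1 hq, by simp [hi, hqS]⟩
  · obtain ⟨p, hp⟩ := card_pos.1 hk
    exact ⟨p, mem_range.1 (hSn hp), by simp [hi, hp]⟩

open Classical in
/-- The result of applying to `y` the generators `g i` of a sequence of adjacent transpositions
which leads from an initial segment of `ℕ` to `S`. -/
def orbitElt (g : ℕ → A) (y : M) (S : Finset ℕ) : M :=
  if h : ∃ i, i ∉ S ∧ i + 1 ∈ S then g h.choose • orbitElt g y (sw h.choose • S) else y
termination_by ∑ p ∈ S, p
decreasing_by exact sum_sw_smul_lt h.choose_spec.1 h.choose_spec.2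

lemma orbitElt_range (g : ℕ → A) (y : M) (k : ℕ) : orbitElt g y (range k) = y := by
  rw [orbitElt, dif_neg]
  rintro ⟨i, h₁, h₂⟩
  simp only [mem_range] at h₁ h₂
  omega

namespace YTLRelations

variable {d n k : ℕ} {ζ u : F} {g t : ℕ → A} {a b : Fin d} {S : Finset ℕ} {i : ℕ} {y : M}
  (h : YTLRelations d n u g t)
include h

omit [Module F M] [IsScalarTower F A M] in
lemma orbitElt_of_descent (y : M) (hS : S ⊆ range n) (hi : i ∉ S) (hi' : i + 1 ∈ S) :
    orbitElt g y S = g i • orbitElt g y (sw i • S) := by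
  induction hm : ∑ p ∈ S, p using Nat.strong_induction_on generalizing S i with | _ m ih
  have hex : ∃ i, i ∉ S ∧ i + 1 ∈ S := ⟨i, hi, hi'⟩
  obtain ⟨hj, hj'⟩ := hex.choose_spec
  rw [orbitElt, dif_pos hex]
  generalize hex.choose = j at hj hj' ⊢
  rcases eq_or_ne i j with rfl | hij
  · rfl
  have hij' : i ≠ j + 1 := fun e => hi (e ▸ hj')
  have hji' : j ≠ i + 1 := fun e => hj (e ▸ hi')
  have hin : i + 1 < n := mem_range.1 (hS hi')
  have hjn : j + 1 < n := mem_range.1 (hS hj')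
  have hcomm : Commute (g i) (g j) ∧ Commute (sw i) (sw j) := by
    rcases lt_or_gt_of_ne hij with hlt | hlt
    · exact ⟨h.comm i j (by omega) hjn, sw_commute (by omega)⟩
    · exact ⟨(h.comm j i (by omega) hin).symm, (sw_commute (by omega)).symm⟩
  rw [ih _ (hm ▸ sum_sw_smul_lt hj hj') (sw_smul_subset_range hjn hS) (i := i)
      (by rwa [mem_swap_smul, sw_apply_of_ne hij hij'])
      (by rwa [mem_swap_smul, sw_apply_of_ne hji'.symm (by omega)]) rfl,
    ih _ (hm ▸ sum_sw_smul_lt hi hi') (sw_smul_subset_range hin hS) (i := j)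
      (by rwa [mem_swap_smul, sw_apply_of_ne hij.symm hji'])
      (by rwa [mem_swap_smul, sw_apply_of_ne hij'.symm (by omega)]) rfl,
    smul_smul, smul_smul, smul_smul, smul_smul, hcomm.1.eq, hcomm.2.eq]

lemma hasWeight_orbitElt {v : Fin d → F} (hy : HasWeight n v t (twoValued a b (range k)) y) :
    ∀ S ∈ powersetCard k (range n), HasWeight n v t (twoValued a b S) (orbitElt g y S) := by
  refine descent_induction (by rwa [orbitElt_range]) fun S hS i hin hi hi' ih => ?_
  rw [h.orbitElt_of_descent y (mem_powersetCard.1 hS).1 hi hi']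
  have := h.hasWeight_smul ih hin
  rwa [← twoValued_sw_smul, sw_smul_sw_smul] at this

lemma orbitElt_mem_leftIdeal (e : A) :
    ∀ S ∈ powersetCard k (range n), orbitElt g e S ∈ leftIdeal F e := by
  refine descent_induction (by rw [orbitElt_range]; exact ⟨1, one_mul e⟩)
    fun S hS i _ hi hi' ⟨x, hx⟩ => ⟨g i * x, ?_⟩
  rw [h.orbitElt_of_descent e (mem_powersetCard.1 hS).1 hi hi', ← hx]
  exact mul_assoc _ _ _

lemma g_smul_orbitElt (hζ : IsPrimitiveRoot ζ d) (hab : a ≠ b) (hk : 0 < k) (hkn : k < n)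
    (hy : HasWeight n (rootPow ζ) t (twoValued a b (range k)) y)
    (hS : S ∈ powersetCard k (range n)) (hi : i + 1 < n) :
    g i • orbitElt g y S = orbitElt g y (sw i • S) ∨ g i • orbitElt g y S = -orbitElt g y S := by
  have hS' := sw_smul_mem_powersetCard hi hS
  have hw := h.hasWeight_orbitElt hy S hS
  by_cases hiS : i ∈ S ↔ i + 1 ∈ S
  · obtain ⟨p, hp, hne⟩ := exists_twoValued_ne hab hk hkn hS i
    exact Or.inr (h.g_smul_eq_neg hζ hw hi hp ((twoValued_eq_iff hab).2 hiS) hne)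
  · left
    by_cases h₁ : i ∈ S
    · have h₂ : i + 1 ∉ S := by tauto
      rw [h.orbitElt_of_descent y (mem_powersetCard.1 hS').1 (i := i)
        (by rwa [mem_swap_smul, swap_apply_left]) (by rwa [mem_swap_smul, swap_apply_right]),
        sw_smul_sw_smul]
    · have h₂ : i + 1 ∈ S := by tauto
      rw [h.orbitElt_of_descent y (mem_powersetCard.1 hS).1 h₁ h₂]
      refine h.g_smul_g_smul_of_ne hζ (h.hasWeight_orbitElt hy _ hS') hi ?_
      rw [Ne, twoValued_eq_iff hab, mem_swap_smul, mem_swap_smul, swap_apply_left, swap_apply_right]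
      tauto

end YTLRelations

/-- The generators `g i` and `t p` with indices in range. -/
def generators (n : ℕ) (g t : ℕ → A) : Set A := {x | (∃ i, i + 1 < n ∧ x = g i) ∨ ∃ p < n, x = t p}

lemma smul_mem_of_generators {n : ℕ} {g t : ℕ → A} (hgen : Algebra.adjoin F (generators n g t) = ⊤)
    {N : Submodule F M} (hg : ∀ i, i + 1 < n → ∀ y ∈ N, g i • y ∈ N)
    (ht : ∀ p < n, ∀ y ∈ N, t p • y ∈ N) (x : A) : ∀ y ∈ N, x • y ∈ N := by
  have hx : x ∈ Algebra.adjoin F (generators n g t) := hgen ▸ Algebra.mem_top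
  induction hx using Algebra.adjoin_induction with
  | mem x hx =>
    rcases hx with ⟨i, hi, rfl⟩ | ⟨p, hp, rfl⟩
    · exact hg i hi
    · exact ht p hp
  | algebraMap c => exact fun y hy => by simpa using N.smul_mem c hy
  | add x x' _ _ hx hx' => exact fun y hy => by simpa [add_smul] using add_mem (hx y hy) (hx' y hy)
  | mul x x' _ _ hx hx' => exact fun y hy => by simpa [mul_smul] using hx _ (hx' y hy)

lemma leftIdeal_eq_of_generators {n : ℕ} {g t : ℕ → A}
    (hgen : Algebra.adjoin F (generators n g t) = ⊤) {N : Submodule F A} {e : A} (he : e ∈ N)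
    (hN : N ≤ leftIdeal F e) (hg : ∀ i, i + 1 < n → ∀ y ∈ N, g i • y ∈ N)
    (ht : ∀ p < n, ∀ y ∈ N, t p • y ∈ N) : leftIdeal F e = N := by
  refine le_antisymm ?_ hN
  rintro _ ⟨x, rfl⟩
  exact smul_mem_of_generators hgen hg ht x e he

lemma smul_mem_span_range {κ : Type*} {f : κ → M} {x : A}
    (hx : ∀ j, x • f j ∈ Submodule.span F (Set.range f)) :
    ∀ y ∈ Submodule.span F (Set.range f), x • y ∈ Submodule.span F (Set.range f) := by
  intro y hy
  induction hy using Submodule.span_induction with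
  | mem _ hy => obtain ⟨j, rfl⟩ := hy; exact hx j
  | zero => simp
  | add y y' _ _ hy hy' => rw [smul_add]; exact add_mem hy hy'
  | smul c y _ hy => rw [smul_algebra_smul_comm]; exact Submodule.smul_mem _ _ hy

lemma YTLRelations.leftIdeal_twoValued {d n k : ℕ} [NeZero d] {ζ u : F} {g t : ℕ → A}
    (h : YTLRelations d n u g t) (hgen : Algebra.adjoin F (generators n g t) = ⊤)
    (hζ : IsPrimitiveRoot ζ d) {a b : Fin d} (hab : a ≠ b) (hk : 0 < k) (hkn : k < n) :
    leftIdeal F (weightIdem (rootPow ζ) t (twoValued a b (range k)) n) =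
      Submodule.span F (Set.range fun S : powersetCard k (range n) =>
        orbitElt g (weightIdem (rootPow ζ) t (twoValued a b (range k)) n) S) := by
  have he := h.hasWeight_weightIdem hζ (twoValued a b (range k))
  set e := weightIdem (rootPow ζ) t (twoValued a b (range k)) n
  have hmem : ∀ S ∈ powersetCard k (range n), orbitElt g e S ∈ Submodule.span F
      (Set.range fun S : powersetCard k (range n) => orbitElt g e S) :=
    fun S hS => Submodule.subset_span ⟨⟨S, hS⟩, rfl⟩
  refine leftIdeal_eq_of_generators hgen ?_ ?_ (fun i hi => smul_mem_span_range ?_)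
    (fun p hp => smul_mem_span_range ?_)
  · simpa only [orbitElt_range] using hmem (range k) (by simp [mem_powersetCard, hkn.le])
  · rw [Submodule.span_le, Set.range_subset_iff]
    exact fun S => h.orbitElt_mem_leftIdeal e S S.2
  · rintro ⟨S, hS⟩
    rcases h.g_smul_orbitElt hζ hab hk hkn he hS hi with h' | h' <;> simp only [h']
    · exact hmem _ (sw_smul_mem_powersetCard hi hS)
    · exact neg_mem (hmem S hS)
  · rintro ⟨S, hS⟩
    rw [h.hasWeight_orbitElt he S hS p hp]
    exact Submodule.smul_mem _ _ (hmem S hS)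

end Orbit

section SetRep

variable {F A : Type*} [Field F] [Ring A] [Algebra F A] {d n k : ℕ} {ζ u : F} {g t : ℕ → A}
  {a b : Fin d}

variable (F) in
/-- The action of `g i` on the free module on finite sets: minus the transposition `(i, i + 1)`. -/
def setG (i : ℕ) : Module.End F (Finset ℕ →₀ F) := -Finsupp.lmapDomain F F (sw i • ·)

/-- The diagonal action of `t p` on the free module on finite sets, in which `S` has the weight
`twoValued a b S`. -/
def setT (ζ : F) (a b : Fin d) (p : ℕ) : Module.End F (Finset ℕ →₀ F) :=
  Finsupp.linearCombination F fun S => rootPow ζ (twoValued a b S p) • Finsupp.single S 1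

lemma setG_single (i : ℕ) (S : Finset ℕ) :
    setG F i (Finsupp.single S 1) = -Finsupp.single (sw i • S) 1 := by
  simp [setG]

lemma setT_single (ζ : F) (a b : Fin d) (p : ℕ) (S : Finset ℕ) :
    setT ζ a b p (Finsupp.single S 1) = rootPow ζ (twoValued a b S p) • Finsupp.single S 1 := by
  rw [setT, Finsupp.linearCombination_single, one_smul]

lemma hasWeight_single (n : ℕ) (ζ : F) (a b : Fin d) (S : Finset ℕ) :
    HasWeight n (rootPow ζ) (setT ζ a b) (twoValued a b S) (Finsupp.single S (1 : F)) :=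
  fun p _ => setT_single ζ a b p S

lemma end_ext {f f' : Module.End F (Finset ℕ →₀ F)}
    (h : ∀ S, f (Finsupp.single S 1) = f' (Finsupp.single S 1)) : f = f' :=
  Finsupp.lhom_ext' fun S => LinearMap.ext_ring (h S)

lemma setG_commute {i j : ℕ} (hij : i + 1 < j) : Commute (setG F i) (setG F j) :=
  end_ext fun S => by
    simp only [Module.End.mul_apply, setG_single, map_neg, smul_smul, (sw_commute hij).eq]

lemma setG_braid (i : ℕ) :
    setG F i * setG F (i + 1) * setG F i = setG F (i + 1) * setG F i * setG F (i + 1) :=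
  end_ext fun S => by
    simp only [Module.End.mul_apply, setG_single, map_neg, smul_smul, ← mul_assoc, sw_braid]

lemma setT_commute (ζ : F) (a b : Fin d) (p q : ℕ) : Commute (setT ζ a b p) (setT ζ a b q) :=
  end_ext fun S => by
    simp only [Module.End.mul_apply, setT_single, map_smul, smul_smul, mul_comm]

lemma setT_mul_setG (ζ : F) (a b : Fin d) (i p : ℕ) :
    setT ζ a b p * setG F i = setG F i * setT ζ a b (sw i p) :=
  end_ext fun S => by
    simp only [Module.End.mul_apply, setT_single, setG_single, map_smul, map_neg, smul_neg,
      twoValued_sw_smul, comp_apply]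

lemma setT_pow (hζ : IsPrimitiveRoot ζ d) (a b : Fin d) (p : ℕ) : setT ζ a b p ^ d = 1 :=
  end_ext fun S => by
    have := pow_smul_of_smul_eq (hasWeight_single (p + 1) ζ a b S p p.lt_succ_self) d
    rwa [rootPow_pow hζ, one_smul] at this

lemma setG_mul_self [NeZero d] (hζ : IsPrimitiveRoot ζ d) (hab : a ≠ b) (u : F) (i : ℕ) :
    setG F i * setG F i = 1 + (u - 1) • eElt F d (setT ζ a b) i +
      (u - 1) • (eElt F d (setT ζ a b) i * setG F i) :=
  end_ext fun S => by
    have hw (S : Finset ℕ) := hasWeight_single (i + 2) ζ a b S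
    simp only [Module.End.mul_apply, LinearMap.add_apply, LinearMap.smul_apply, setG_single,
      map_neg, neg_neg, sw_smul_sw_smul, Module.End.one_apply]
    by_cases hi : i ∈ S ↔ i + 1 ∈ S
    · have he : eElt F d (setT ζ a b) i (Finsupp.single S 1) = Finsupp.single S 1 :=
        eElt_smul_of_eq hζ.neZero'.out (rootPow_pow hζ _) (hw S i (by omega))
          ((twoValued_eq_iff hab).2 hi ▸ hw S (i + 1) (by omega))
      rw [swap_smul_eq_self hi, he]
      module
    · have hne : twoValued a b S i ≠ twoValued a b S (i + 1) := mt (twoValued_eq_iff hab).1 hi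
      have he (S : Finset ℕ) (hS : twoValued a b S i ≠ twoValued a b S (i + 1)) :
          eElt F d (setT ζ a b) i (Finsupp.single S 1) = 0 :=
        eElt_smul_of_ne (rootPow_pow hζ _) (rootPow_pow hζ _) ((rootPow_injective hζ).ne hS)
          (hw S i (by omega)) (hw S (i + 1) (by omega))
      rw [he S hne, he _ (by simpa [twoValued_sw_smul] using hne.symm)]
      module

/-- Two of `i`, `i + 1`, `i + 2` are both in `S` or both outside `S`, so that the transposition of
these two fixes `S` and the sum of the signed permutations in the relation vanishes. -/
lemma setG_temperleyLieb (i : ℕ) :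
    setG F i * setG F (i + 1) * setG F i + setG F i * setG F (i + 1) + setG F (i + 1) * setG F i +
      setG F i + setG F (i + 1) + 1 = 0 :=
  end_ext fun S => by
    simp only [Module.End.mul_apply, LinearMap.add_apply, setG_single, map_neg, neg_neg,
      Module.End.one_apply, LinearMap.zero_apply]
    have hbraid : sw i • sw (i + 1) • sw i • S = sw (i + 1) • sw i • sw (i + 1) • S := by
      simp only [smul_smul, ← mul_assoc, sw_braid]
    by_cases h₁ : i ∈ S ↔ i + 1 ∈ S
    · rw [swap_smul_eq_self h₁]
      abel
    by_cases h₂ : i + 1 ∈ S ↔ i + 2 ∈ S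
    · rw [hbraid, swap_smul_eq_self h₂]
      abel
    · have hconj : sw i • sw (i + 1) • sw i • S = S := by
        rw [smul_smul, smul_smul, sw_mul_sw_mul_sw, swap_smul_eq_self (by tauto)]
      have h₁₀ : sw (i + 1) • sw i • S = sw i • S := by
        rw [← sw_smul_sw_smul i (sw (i + 1) • sw i • S), hconj]
      have h₀₁ : sw i • sw (i + 1) • S = sw (i + 1) • S := by
        rw [← sw_smul_sw_smul (i + 1) (sw i • sw (i + 1) • S), ← hbraid, hconj]
      rw [hconj, h₁₀, h₀₁]
      abel

lemma ytlRelations_set [NeZero d] (hζ : IsPrimitiveRoot ζ d) (hab : a ≠ b) (n : ℕ) (u : F) :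
    YTLRelations d n u (setG F) (setT ζ a b) where
  comm _ _ hij _ := setG_commute hij
  braid i _ := setG_braid i
  tcomm p _ q _ := setT_commute ζ a b p q
  tg i p _ _ := setT_mul_setG ζ a b i p
  tpow p _ := setT_pow hζ a b p
  quad i _ := setG_mul_self hζ hab u i
  tl i _ := setG_temperleyLieb i

section Pullback

variable {φ : A →ₐ[F] Module.End F (Finset ℕ →₀ F)} (hg : ∀ i, i + 1 < n → φ (g i) = setG F i)
include hg

lemma map_orbitElt_single (h : YTLRelations d n u g t) {e : A}
    (he : φ e (Finsupp.single (range k) 1) = Finsupp.single (range k) 1) :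
    ∀ S ∈ powersetCard k (range n), ∃ c : Fˣ,
      φ (orbitElt g e S) (Finsupp.single (range k) 1) = c • Finsupp.single S (1 : F) := by
  refine descent_induction ⟨1, by rw [orbitElt_range, he, one_smul]⟩
    fun S hS i hin hi hi' ⟨c, hc⟩ => ⟨-c, ?_⟩
  rw [h.orbitElt_of_descent e (mem_powersetCard.1 hS).1 hi hi', smul_eq_mul, map_mul,
    Module.End.mul_apply, hc, hg i hin, Units.smul_def, map_smul, setG_single, sw_smul_sw_smul,
    Units.smul_def, Units.val_neg, neg_smul, smul_neg]

lemma linearIndependent_orbitElt (h : YTLRelations d n u g t)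
    (hζ : IsPrimitiveRoot ζ d) (ht : ∀ p < n, φ (t p) = setT ζ a b p) :
    LinearIndependent F fun S : powersetCard k (range n) =>
      orbitElt g (weightIdem (rootPow ζ) t (twoValued a b (range k)) n) S := by
  have he : φ (weightIdem (rootPow ζ) t (twoValued a b (range k)) n) (Finsupp.single (range k) 1) =
      Finsupp.single (range k) 1 := by
    rw [map_weightIdem (B := Module.End F (Finset ℕ →₀ F)) ht _ le_rfl]
    exact (hasWeight_single n ζ a b (range k)).weightIdem_smul (rootPow_injective hζ) le_rfl
      fun _ _ => rfl
  choose c hc using map_orbitElt_single hg h he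
  refine LinearIndependent.of_comp
    ((LinearMap.applyₗ (Finsupp.single (range k) (1 : F))).comp φ.toLinearMap) ?_
  have hli : LinearIndependent F fun S : powersetCard k (range n) =>
      (Finsupp.single S.1 1 : Finset ℕ →₀ F) :=
    (Finsupp.linearIndependent_single_one F (Finset ℕ)).comp _ Subtype.val_injective
  convert hli.units_smul fun S => c S S.2 using 1
  funext S
  exact hc S S.2

end Pullback

end SetRep

section Constant

variable {F A M : Type*} [Field F] [Ring A] [Algebra F A] [AddCommGroup M] [Module F M]
  [Module A M] [IsScalarTower F A M] {d n : ℕ} {ζ u : F} {g t : ℕ → A} {e : A}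

lemma add_one_mul_add_one_mul_add_one {a b : A} (h : a * b * a + a * b + b * a + a + b + 1 = 0) :
    (a + 1) * (b + 1) * (a + 1) = a * a + a := by
  rw [← zero_add (a * a + a), ← h]
  noncomm_ring

/-- In the corner ring `e A e` of an idempotent `e` that absorbs every `g i * e` from the left, the
element `g i + 1`. -/
def cornerGen (g : ℕ → A) (e : A) (i : ℕ) : A := (g i + 1) * e

lemma mul_cornerGen (he : e * e = e) {i : ℕ} (hi : e * (g i * e) = g i * e) :
    e * cornerGen g e i = cornerGen g e i := by
  rw [cornerGen, add_mul, one_mul, mul_add, hi, he]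

lemma cornerGen_mul {x : A} (hx : e * x = x) (i : ℕ) : cornerGen g e i * x = g i * x + x := by
  rw [cornerGen, mul_assoc, hx, add_mul, one_mul]

lemma mul_prod_cornerGen_mul (he : e * e = e) {w : List ℕ}
    (hw : ∀ i ∈ w, e * (g i * e) = g i * e) :
    e * ((w.map (cornerGen g e)).prod * e) = (w.map (cornerGen g e)).prod * e := by
  rcases w with _ | ⟨i, w⟩
  · rw [List.map_nil, List.prod_nil, one_mul, he]
  · rw [List.map_cons, List.prod_cons, mul_assoc, ← mul_assoc e,
      mul_cornerGen he (hw i List.mem_cons_self)]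

lemma map_mulRight_wordSpan (V : ℕ → A) (e : A) (m : ℕ) :
    (TemperleyLieb.wordSpan F V m).map (LinearMap.mulRight F e) =
      Submodule.span F (Set.range fun w : TemperleyLieb.normalWords m m =>
        (w.1.map V).prod * e) := by
  rw [TemperleyLieb.wordSpan, Submodule.map_span, Set.image_image, Set.image_eq_range]
  rfl

namespace YTLRelations

variable (h : YTLRelations d n u g t)
include h

lemma tl_symm {i : ℕ} (hi : i + 2 < n) :
    g (i + 1) * g i * g (i + 1) + g (i + 1) * g i + g i * g (i + 1) + g (i + 1) + g i + 1 = 0 := by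
  rw [← h.tl i hi, h.braid i hi]
  abel

lemma relations_cornerGen (he : e * e = e) (hcorner : ∀ i, i + 1 < n → e * (g i * e) = g i * e)
    (hsq : ∀ i, i + 1 < n → g i * (g i * e) = u • e + (u - 1) • (g i * e)) :
    TemperleyLieb.Relations n u (cornerGen g e) := by
  have hmul {i j : ℕ} (hj : j + 1 < n) :
      cornerGen g e i * cornerGen g e j = (g i + 1) * (g j + 1) * e := by
    rw [cornerGen, mul_assoc, mul_cornerGen he (hcorner j hj), cornerGen, mul_assoc]
  have hmul₃ {i j k : ℕ} (hj : j + 1 < n) (hk : k + 1 < n) :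
      cornerGen g e i * cornerGen g e j * cornerGen g e k =
        (g i + 1) * (g j + 1) * (g k + 1) * e := by
    rw [hmul hj, mul_assoc, mul_cornerGen he (hcorner k hk), cornerGen, ← mul_assoc]
  have hrel {i : ℕ} (hi : i + 1 < n) : (g i * g i + g i) * e = u • cornerGen g e i := by
    rw [cornerGen, add_mul, add_mul, mul_assoc, hsq i hi, one_mul]
    module
  refine ⟨fun i hi => ?_, fun i hi => ?_, fun i hi => ?_, fun i j hij hj => ?_⟩
  · have : (g i + 1) * (g i + 1) = g i * g i + g i + (g i + 1) := by noncomm_ring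
    rw [hmul hi, this, add_mul, hrel hi, add_smul, one_smul, cornerGen]
  · rw [hmul₃ (by omega) (by omega), add_one_mul_add_one_mul_add_one (h.tl i hi),
      hrel (by omega)]
  · rw [hmul₃ (by omega) (by omega), add_one_mul_add_one_mul_add_one (h.tl_symm hi),
      hrel (by omega)]
  · have hc : Commute (g i + 1) (g j + 1) :=
      ((h.comm i j hij hj).add_right (.one_right _)).add_left (.one_left _)
    rw [commute_iff_eq, hmul hj, hmul (by omega), hc.eq]

variable [NeZero d] (hζ : IsPrimitiveRoot ζ d) (a : Fin d)
include hζ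

lemma weightIdem_const_mul_self :
    weightIdem (rootPow ζ) t (fun _ => a) n * weightIdem (rootPow ζ) t (fun _ => a) n =
      weightIdem (rootPow ζ) t (fun _ => a) n :=
  weightIdem_mul_self (rootPow_injective hζ) (h.hasWeight_weightIdem hζ _)

lemma weightIdem_const_mul_g_mul {i : ℕ} (hi : i + 1 < n) :
    weightIdem (rootPow ζ) t (fun _ => a) n * (g i * weightIdem (rootPow ζ) t (fun _ => a) n) =
      g i * weightIdem (rootPow ζ) t (fun _ => a) n :=
  h.weightIdem_smul_g_smul_of_eq hζ (h.hasWeight_weightIdem hζ _) hi rfl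

lemma relations_cornerGen_weightIdem :
    TemperleyLieb.Relations n u (cornerGen g (weightIdem (rootPow ζ) t (fun _ => a) n)) :=
  h.relations_cornerGen (h.weightIdem_const_mul_self hζ a)
    (fun _ => h.weightIdem_const_mul_g_mul hζ a)
    fun _ hi => h.g_smul_g_smul_of_eq hζ (h.hasWeight_weightIdem hζ fun _ => a) hi rfl

lemma leftIdeal_const (hgen : Algebra.adjoin F (generators n g t) = ⊤) (hn : 0 < n) :
    leftIdeal F (weightIdem (rootPow ζ) t (fun _ => a) n) =
      Submodule.span F (Set.range fun w : TemperleyLieb.normalWords (n - 1) (n - 1) =>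
        (w.1.map (cornerGen g (weightIdem (rootPow ζ) t (fun _ => a) n))).prod *
          weightIdem (rootPow ζ) t (fun _ => a) n) := by
  have hrel := h.relations_cornerGen_weightIdem hζ a
  have he := h.weightIdem_const_mul_self hζ a
  have hw := h.hasWeight_weightIdem hζ fun _ => a
  have hcorner (i : ℕ) (hi : i + 1 < n) := h.weightIdem_const_mul_g_mul hζ a hi
  set e := weightIdem (rootPow ζ) t (fun _ => a) n
  have hfix (w : TemperleyLieb.normalWords (n - 1) (n - 1)) :
      e * ((w.1.map (cornerGen g e)).prod * e) = (w.1.map (cornerGen g e)).prod * e :=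
    mul_prod_cornerGen_mul he fun i hi =>
      hcorner i (by have := TemperleyLieb.lt_of_mem_normalWords w.2 hi; omega)
  have hmem {x : A} (hx : x ∈ TemperleyLieb.wordSpan F (cornerGen g e) (n - 1)) :
      x * e ∈ Submodule.span F (Set.range fun w : TemperleyLieb.normalWords (n - 1) (n - 1) =>
        (w.1.map (cornerGen g e)).prod * e) :=
    map_mulRight_wordSpan (F := F) (cornerGen g e) e (n - 1) ▸ Submodule.mem_map_of_mem hx
  refine leftIdeal_eq_of_generators hgen ?_ ?_ (fun i hi => smul_mem_span_range fun w => ?_)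
    (fun p hp => smul_mem_span_range fun w => ?_)
  · simpa using hmem (TemperleyLieb.one_mem_wordSpan _)
  · rw [Submodule.span_le, Set.range_subset_iff]
    exact fun w => mul_mem_leftIdeal _ e
  · have hw := TemperleyLieb.prod_mem_wordSpan (R := F) (V := cornerGen g e) w.2
    rw [smul_eq_mul, ← add_sub_cancel_right (g i * _) _, ← cornerGen_mul (hfix w), ← mul_assoc]
    exact sub_mem (hmem (hrel.mul_mem_wordSpan (by omega) i (by omega) _ hw)) (hmem hw)
  · rw [← hfix w, smul_eq_mul, ← mul_assoc, ← smul_eq_mul (t p), hw p hp, smul_mul_assoc, hfix w]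
    exact Submodule.smul_mem _ _ (Submodule.subset_span ⟨w, rfl⟩)

end YTLRelations

end Constant

section ConstantRep

variable {F A B : Type*} [Field F] [Ring A] [Algebra F A] [Ring B] [Algebra F B] {d n : ℕ}
  {ζ u : F} {g t : ℕ → A} {V : ℕ → B}

lemma hasWeight_scalar (n : ℕ) (ζ : F) (a : Fin d) :
    HasWeight n (rootPow ζ) (fun _ => rootPow ζ a • (1 : B)) (fun _ => a) (1 : B) :=
  fun p _ => by simp

lemma ytlRelations_of_temperleyLieb [NeZero d] (h : TemperleyLieb.Relations n u V)
    (hζ : IsPrimitiveRoot ζ d) (a : Fin d) :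
    YTLRelations d n u (fun i => V i - 1) (fun _ => rootPow ζ a • 1) where
  comm i j hij hj := ((h.comm i j hij hj).sub_right (.one_right _)).sub_left (.one_left _)
  braid i hi := by
    simp only [sub_mul, mul_sub, h.up i hi, h.down i hi, h.sq i (by omega), h.sq (i + 1) hi,
      one_mul, mul_one]
    module
  tcomm _ _ _ _ := Commute.refl _
  tg _ _ _ _ := by simp
  tpow _ _ := by rw [_root_.smul_pow, one_pow, rootPow_pow hζ, one_smul]
  quad i hi := by
    have he : eElt F d (fun _ => rootPow ζ a • (1 : B)) i = 1 := by
      have hw := hasWeight_scalar (B := B) (i + 2) ζ a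
      simpa only [smul_eq_mul, mul_one] using eElt_smul_of_eq (t := fun _ => rootPow ζ a • (1 : B))
        hζ.neZero'.out (rootPow_pow hζ a) (hw i (by omega)) (hw (i + 1) (by omega))
    simp only [he, sub_mul, mul_sub, h.sq i hi, one_mul, mul_one]
    module
  tl i hi := by
    simp only [sub_mul, mul_sub, h.up i hi, h.sq i (by omega), one_mul, mul_one]
    module

lemma linearIndependent_prod_cornerGen (hζ : IsPrimitiveRoot ζ d) {φ : A →ₐ[F] B} {a : Fin d}
    (hg : ∀ i, i + 1 < n → φ (g i) = V i - 1) (ht : ∀ p < n, φ (t p) = rootPow ζ a • 1)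
    (hV : LinearIndependent F fun w : TemperleyLieb.normalWords (n - 1) (n - 1) =>
      (w.1.map V).prod) :
    LinearIndependent F fun w : TemperleyLieb.normalWords (n - 1) (n - 1) =>
      (w.1.map (cornerGen g (weightIdem (rootPow ζ) t (fun _ => a) n))).prod *
        weightIdem (rootPow ζ) t (fun _ => a) n := by
  have he : φ (weightIdem (rootPow ζ) t (fun _ => a) n) = 1 := by
    rw [map_weightIdem ht _ le_rfl, ← mul_one (weightIdem _ _ _ _)]
    exact (hasWeight_scalar n ζ a).weightIdem_smul (rootPow_injective hζ) le_rfl fun _ _ => rfl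
  refine LinearIndependent.of_comp φ.toLinearMap ?_
  convert hV using 1
  funext w
  simp only [comp_apply, AlgHom.toLinearMap_apply, map_mul, he, mul_one, map_list_prod,
    List.map_map]
  congr 1
  refine List.map_congr_left fun i hi => ?_
  have := TemperleyLieb.lt_of_mem_normalWords w.2 hi
  simp [cornerGen, he, hg i (by omega)]

end ConstantRep

section LeftIdealDim

universe w w'

variable {F : Type w} {A : Type w'} [Field F] [Ring A] [Algebra F A] {d n k : ℕ} {ζ u : F}
  {g t : ℕ → A} {χ : ℕ → Fin d}

/-- The algebra `A` is presented by the generators `g 0, …, g (n - 2)`, `t 0, …, t (n - 1)` and the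
relations of the Yokonuma–Temperley–Lieb algebra. The universal property only tests algebras in
the universe of `F`, which is where the representations constructed here live. -/
structure IsYokonumaTemperleyLieb (d n : ℕ) (u : F) (g t : ℕ → A) : Prop where
  relations : YTLRelations d n u g t
  adjoin_eq_top : Algebra.adjoin F (generators n g t) = ⊤
  exists_algHom : ∀ {B : Type w} [Ring B] [Algebra F B] {g' t' : ℕ → B},
    YTLRelations d n u g' t' →
      ∃ φ : A →ₐ[F] B, (∀ i, i + 1 < n → φ (g i) = g' i) ∧ ∀ p < n, φ (t p) = t' p

lemma YTLRelations.finrank_leftIdeal_comp_sw [NeZero d] (h : YTLRelations d n u g t)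
    (hζ : IsPrimitiveRoot ζ d) {i : ℕ} (hi : i + 1 < n) (hχ : χ i ≠ χ (i + 1)) :
    Module.finrank F (leftIdeal F (weightIdem (rootPow ζ) t (χ ∘ sw i) n)) =
      Module.finrank F (leftIdeal F (weightIdem (rootPow ζ) t χ n)) := by
  have hinj := rootPow_injective hζ
  have hw := h.hasWeight_weightIdem hζ χ
  have hw' := h.hasWeight_weightIdem hζ (χ ∘ sw i)
  have hχ' : (χ ∘ sw i) i ≠ (χ ∘ sw i) (i + 1) := by simpa using hχ.symm
  have hsw : χ = (χ ∘ sw i) ∘ sw i := by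
    ext p
    simp
  have he := weightIdem_mul_self hinj hw
  have hf := weightIdem_mul_self hinj hw'
  have hfe := (h.hasWeight_smul hw hi).weightIdem_smul hinj le_rfl fun _ _ => rfl
  have hef := (h.hasWeight_smul hw' hi).weightIdem_smul (χ' := χ) hinj le_rfl
    fun p _ => congrFun hsw.symm p
  have hab := h.g_smul_g_smul_of_ne hζ hw hi hχ
  have hba := h.g_smul_g_smul_of_ne hζ hw' hi hχ'
  simp only [smul_eq_mul] at hfe hef hab hba
  refine (leftIdealEquiv F (a := g i * weightIdem (rootPow ζ) t χ n)
    (b := g i * weightIdem (rootPow ζ) t (χ ∘ sw i) n) ?_ ?_ ?_ ?_).finrank_eq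
  · rw [mul_assoc, he]
  · rw [mul_assoc, hf]
  · rw [mul_assoc, hef, hba]
  · rw [mul_assoc, hfe, hab]

namespace IsYokonumaTemperleyLieb

variable [NeZero d] (h : IsYokonumaTemperleyLieb d n u g t) (hζ : IsPrimitiveRoot ζ d)
include h hζ

lemma finrank_leftIdeal_const (hu : u ≠ 0) (hu' : u + 1 ≠ 0) (hn : 0 < n) (a : Fin d) :
    Module.finrank F (leftIdeal F (weightIdem (rootPow ζ) t (fun _ => a) n)) = catalan n := by
  obtain ⟨B, _, _, V, hV, hli⟩ := TemperleyLieb.exists_relations_linearIndependent hu hu'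
  obtain ⟨φ, hg, ht⟩ := h.exists_algHom (ytlRelations_of_temperleyLieb (hV n) hζ a)
  rw [h.relations.leftIdeal_const hζ a h.adjoin_eq_top hn,
    finrank_span_eq_card (linearIndependent_prod_cornerGen hζ hg ht (hli (n - 1))),
    Fintype.card_coe, TemperleyLieb.card_normalWords_self, Nat.sub_add_cancel hn]

lemma finrank_leftIdeal_twoValued {a b : Fin d} (hab : a ≠ b) (hk : 0 < k) (hkn : k < n) :
    ∀ S ∈ powersetCard k (range n),
      Module.finrank F (leftIdeal F (weightIdem (rootPow ζ) t (twoValued a b S) n)) =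
        n.choose k := by
  refine descent_induction ?_ fun S _ i hi hiS hiS' hS => ?_
  · obtain ⟨φ, hg, ht⟩ := h.exists_algHom (ytlRelations_set hζ hab n u)
    rw [h.relations.leftIdeal_twoValued h.adjoin_eq_top hζ hab hk hkn,
      finrank_span_eq_card (linearIndependent_orbitElt hg h.relations hζ ht), Fintype.card_coe,
      card_powersetCard, card_range]
  · rw [← hS, twoValued_sw_smul, h.relations.finrank_leftIdeal_comp_sw hζ hi]
    rw [Ne, twoValued_eq_iff hab]
    exact fun hS => hiS (hS.2 hiS')

end IsYokonumaTemperleyLieb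

end LeftIdealDim

section Counting

variable {d n : ℕ}

/-- The parameters `((a, b), S)` of the functions `twoValued a b S` on `{0, …, n - 1}` taking
exactly two values, where `a < b` singles out one of the two parametrizations. -/
def twoValuedIndex (d n : ℕ) : Finset ((Fin d × Fin d) × Finset ℕ) :=
  ({x | x.1 < x.2} : Finset (Fin d × Fin d)) ×ˢ (range n).ssubsets.erase ∅

/-- The parameters of all functions on `{0, …, n - 1}` taking at most two values. -/
def weightIndex (d n : ℕ) : Finset (Fin d ⊕ ((Fin d × Fin d) × Finset ℕ)) :=
  univ.disjSum (twoValuedIndex d n)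

/-- The weight with a given parameter. -/
def weightOf : Fin d ⊕ ((Fin d × Fin d) × Finset ℕ) → ℕ → Fin d
  | .inl a => fun _ => a
  | .inr x => twoValued x.1.1 x.1.2 x.2

/-- The dimension of the left ideal of the Yokonuma–Temperley–Lieb algebra given by the weight with
a given parameter. -/
def weightDim (n : ℕ) : Fin d ⊕ ((Fin d × Fin d) × Finset ℕ) → ℕ
  | .inl _ => catalan n
  | .inr x => n.choose #x.2

lemma mem_twoValuedIndex {x : (Fin d × Fin d) × Finset ℕ} :
    x ∈ twoValuedIndex d n ↔
      x.1.1 < x.1.2 ∧ x.2 ⊆ range n ∧ (∃ p, p ∈ x.2) ∧ ∃ q < n, q ∉ x.2 := by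
  simp only [twoValuedIndex, mem_product, mem_filter, mem_univ, true_and, mem_erase, mem_ssubsets,
    ssubset_def, not_subset, mem_range, ← nonempty_iff_ne_empty, Finset.Nonempty]
  tauto

lemma twoValued_index_injective {x y : (Fin d × Fin d) × Finset ℕ} (hx : x ∈ twoValuedIndex d n)
    (hy : y ∈ twoValuedIndex d n)
    (h : ∀ p < n, twoValued x.1.1 x.1.2 x.2 p = twoValued y.1.1 y.1.2 y.2 p) : x = y := by
  obtain ⟨⟨a, b⟩, S⟩ := x
  obtain ⟨⟨a', b'⟩, S'⟩ := y
  obtain ⟨hab, hS, ⟨p, hp⟩, q, hqn, hq⟩ := mem_twoValuedIndex.1 hx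
  obtain ⟨hab', hS', ⟨p', hp'⟩, q', hqn', hq'⟩ := mem_twoValuedIndex.1 hy
  have hpn := mem_range.1 (hS hp)
  have hpn' := mem_range.1 (hS' hp')
  simp only [twoValued] at *
  obtain ⟨rfl, rfl⟩ : a = a' ∧ b = b' := by grind
  have : S = S' := by
    ext r
    grind
  rw [this]

lemma weightOf_injOn (hn : 0 < n) :
    Set.InjOn (fun (j : Fin d ⊕ _) (p : Fin n) => weightOf j p) (weightIndex d n) := by
  have hne (a : Fin d) {x} (hx : x ∈ twoValuedIndex d n)
      (h : ∀ p < n, a = twoValued x.1.1 x.1.2 x.2 p) : False := by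
    obtain ⟨hab, hS, ⟨p, hp⟩, q, hqn, hq⟩ := mem_twoValuedIndex.1 hx
    have := (h p (mem_range.1 (hS hp))).symm.trans (h q hqn)
    exact ((twoValued_eq_iff hab.ne).not.2 (by tauto)) this
  rintro (a | x) hx (b | y) hy h <;> replace h (p) (hp : p < n) := congrFun h ⟨p, hp⟩ <;>
    simp only [weightIndex, mem_coe, inr_mem_disjSum] at hx hy
  · exact congrArg Sum.inl (h 0 hn)
  · exact (hne a hy h).elim
  · exact (hne b hx fun p hp => (h p hp).symm).elim
  · exact congrArg Sum.inr (twoValued_index_injective hx hy h)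

lemma exists_mem_twoValuedIndex {χ : ℕ → Fin d} {q q' : ℕ} (hq : q < n) (hq' : q' < n)
    (hne : χ q ≠ χ q') (h : ∀ p < n, χ p = χ q ∨ χ p = χ q') :
    ∃ x ∈ twoValuedIndex d n, ∀ p < n, twoValued x.1.1 x.1.2 x.2 p = χ p := by
  wlog hlt : χ q < χ q' generalizing q q'
  · exact this hq' hq hne.symm (fun p hp => (h p hp).symm) (hne.lt_or_gt.resolve_left hlt)
  refine ⟨((χ q, χ q'), {p ∈ range n | χ p = χ q}), mem_twoValuedIndex.2
    ⟨hlt, filter_subset _ _, ⟨q, by simp [hq]⟩, q', hq', by simp [hne.symm]⟩, fun p hp => ?_⟩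
  simp only [twoValued, mem_filter, mem_range, hp, true_and]
  split_ifs with hpq
  · exact hpq.symm
  · exact ((h p hp).resolve_left hpq).symm

lemma exists_weightOf_or_three_values (χ : ℕ → Fin d) (n : ℕ) :
    (∃ j ∈ weightIndex d n, ∀ p < n, weightOf j p = χ p) ∨
      ∃ p q r, p < q ∧ q < r ∧ r < n ∧ χ p ≠ χ q ∧ χ q ≠ χ r ∧ χ p ≠ χ r := by
  by_cases hconst : ∃ q, q < n ∧ χ q ≠ χ 0
  · classical
    obtain ⟨hqn, hq⟩ := Nat.find_spec hconst
    have hmin {r : ℕ} (hr : r < Nat.find hconst) : χ r = χ 0 := by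
      by_contra hne
      exact Nat.find_min hconst hr ⟨hr.trans hqn, hne⟩
    generalize Nat.find hconst = q at *
    have hq₀ : 0 < q := Nat.pos_of_ne_zero fun h => hq (h ▸ rfl)
    by_cases htwo : ∀ r < n, χ r = χ 0 ∨ χ r = χ q
    · obtain ⟨x, hx, h⟩ := exists_mem_twoValuedIndex (hq₀.trans hqn) hqn hq.symm htwo
      exact .inl ⟨.inr x, inr_mem_disjSum.2 hx, h⟩
    · push Not at htwo
      obtain ⟨r, hrn, hr₀, hrq⟩ := htwo
      have hqr : q < r := (lt_trichotomy q r).resolve_right <| by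
        rintro (rfl | hr)
        exacts [hrq rfl, hr₀ (hmin hr)]
      exact .inr ⟨0, q, r, hq₀, hqr, hrn, hq.symm, hrq.symm, hr₀.symm⟩
  · push Not at hconst
    exact .inl ⟨.inl (χ 0), inl_mem_disjSum.2 (mem_univ _), fun p hp => (hconst p hp).symm⟩

lemma weightDim_pos {j : Fin d ⊕ ((Fin d × Fin d) × Finset ℕ)} (hj : j ∈ weightIndex d n) :
    0 < weightDim n j := by
  rcases j with a | x
  · exact Nat.pos_of_mul_pos_left
      ((succ_mul_catalan_eq_centralBinom n).symm ▸ Nat.centralBinom_pos n)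
  · have hx := (mem_twoValuedIndex.1 (inr_mem_disjSum.1 hj)).2.1
    exact Nat.choose_pos ((card_le_card hx).trans_eq (card_range n))

lemma sum_choose_card_ssubsets (hn : 0 < n) :
    ∑ S ∈ (range n).ssubsets.erase ∅, n.choose #S + 2 = n.centralBinom := by
  have h := sum_powerset_apply_card (fun k => n.choose k) (x := range n)
  have h₀ : ∅ ∈ (range n).ssubsets :=
    mem_ssubsets.2 (empty_ssubset.2 ⟨0, mem_range.2 hn⟩)
  rw [← add_sum_erase _ _ (mem_powerset_self _), ← ssubsets, ← add_sum_erase _ _ h₀] at h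
  simp only [card_empty, Nat.choose_zero_right, card_range, Nat.choose_self, smul_eq_mul,
    ← sq] at h
  rw [Nat.sum_range_choose_sq, ← Nat.centralBinom] at h
  omega

lemma card_lt_pairs (d : ℕ) : #{x : Fin d × Fin d | x.1 < x.2} * 2 = d * (d - 1) := by
  rw [← sum_range_id_mul_two, card_filter, Fintype.sum_prod_type_right,
    ← Fin.sum_univ_eq_sum_range (fun i => i) d]
  congr 1
  refine sum_congr rfl fun b _ => ?_
  rw [← card_filter, ← Fin.card_Iio b]
  congr 1
  ext a
  simp

lemma sum_weightDim (d : ℕ) (hn : 0 < n) :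
    2 * ∑ j ∈ weightIndex d n, weightDim n j + 2 * (d * (d - 1)) =
      2 * d * catalan n + d * (d - 1) * n.centralBinom := by
  have h : ∑ j ∈ weightIndex d n, weightDim n j = d * catalan n +
      #{x : Fin d × Fin d | x.1 < x.2} * ∑ S ∈ (range n).ssubsets.erase ∅, n.choose #S := by
    simp only [weightIndex, weightDim, sum_disjSum, twoValuedIndex, sum_product]
    simp
  rw [h, ← sum_choose_card_ssubsets hn, ← card_lt_pairs]
  ring

end Counting

namespace IsYokonumaTemperleyLieb

variable {F A : Type*} [Field F] [Ring A] [Algebra F A] {d n : ℕ} [NeZero d] {ζ u : F}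
  {g t : ℕ → A} (h : IsYokonumaTemperleyLieb d n u g t) (hζ : IsPrimitiveRoot ζ d)
include h hζ

lemma exists_weightOf_or_weightIdem_eq_zero (χ : Fin n → Fin d) :
    (∃ j ∈ weightIndex d n, (fun p : Fin n => weightOf j p) = χ) ∨
      weightIdem (rootPow ζ) t (extendWeight χ) n = 0 := by
  obtain ⟨j, hj, hχ⟩ | ⟨p, q, r, hpq, hqr, hr, h₁, h₂, h₃⟩ :=
    exists_weightOf_or_three_values (extendWeight χ) n
  · exact .inl ⟨j, hj, funext fun p => (hχ p p.2).trans (extendWeight_apply χ p)⟩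
  · exact .inr (h.relations.eq_zero_of_ne_of_ne_of_ne hζ (h.relations.hasWeight_weightIdem hζ _)
      hpq hqr hr h₁ h₂ h₃)

variable (hu : u ≠ 0) (hu' : u + 1 ≠ 0) (hn : 0 < n)
include hu hu' hn

lemma finrank_leftIdeal_weightOf {j : Fin d ⊕ ((Fin d × Fin d) × Finset ℕ)}
    (hj : j ∈ weightIndex d n) :
    Module.finrank F (leftIdeal F (weightIdem (rootPow ζ) t
      (extendWeight fun p : Fin n => weightOf j p) n)) = weightDim n j := by
  rw [weightIdem_congr fun p hp => extendWeight_apply (fun p : Fin n => weightOf j p) ⟨p, hp⟩]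
  rcases j with a | x
  · exact h.finrank_leftIdeal_const hζ hu hu' hn a
  · obtain ⟨hab, hS, ⟨p, hp⟩, q, hqn, hq⟩ := mem_twoValuedIndex.1 (inr_mem_disjSum.1 hj)
    have hlt : #x.2 < n := by
      simpa using card_lt_card (hS.ssubset_of_mem_notMem (mem_range.2 hqn) hq)
    exact h.finrank_leftIdeal_twoValued hζ hab.ne (card_pos.2 ⟨p, hp⟩) hlt x.2
      (mem_powersetCard.2 ⟨hS, rfl⟩)

lemma finiteDimensional_leftIdeal (χ : Fin n → Fin d) :
    FiniteDimensional F (leftIdeal F (weightIdem (rootPow ζ) t (extendWeight χ) n)) := by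
  obtain ⟨j, hj, rfl⟩ | hχ := h.exists_weightOf_or_weightIdem_eq_zero hζ χ
  · exact .of_finrank_pos (by
      rw [h.finrank_leftIdeal_weightOf hζ hu hu' hn hj]; exact weightDim_pos hj)
  · rw [hχ, leftIdeal, LinearMap.mulRight_zero_eq_zero, LinearMap.range_zero]
    infer_instance

lemma finiteDimensional : FiniteDimensional F A :=
  have := h.finiteDimensional_leftIdeal hζ hu hu' hn
  finiteDimensional_of_leftIdeal (completeOrthogonalIdempotents_weightIdem (rootPow_injective hζ)
    (h.relations.hasWeight_weightIdem hζ))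

lemma finrank_eq_sum_weightDim : Module.finrank F A = ∑ j ∈ weightIndex d n, weightDim n j := by
  have := h.finiteDimensional_leftIdeal hζ hu hu' hn
  rw [finrank_eq_sum_leftIdeal (completeOrthogonalIdempotents_weightIdem (rootPow_injective hζ)
    (h.relations.hasWeight_weightIdem hζ))]
  refine (sum_of_injOn (fun j (p : Fin n) => weightOf j p) (weightOf_injOn hn)
    (fun _ _ => mem_coe.2 (mem_univ _)) (fun χ _ hχ => ?_)
    fun j hj => (h.finrank_leftIdeal_weightOf hζ hu hu' hn hj).symm).symm
  rw [(h.exists_weightOf_or_weightIdem_eq_zero hζ χ).resolve_left hχ, leftIdeal,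
    LinearMap.mulRight_zero_eq_zero, LinearMap.range_zero, finrank_bot]

end IsYokonumaTemperleyLieb

section Presentation

variable {d n : ℕ} {B : Type*} [Ring B] [Algebra K B] {g t : ℕ → B}

lemma swapIdx_succ (i p : ℕ) : swapIdx (i + 1) (p + 1) = sw i p + 1 := by
  simp only [swapIdx, swap_apply_def]
  split_ifs <;> omega

lemma mkAlgHom_eq_of_YRel {a b : FA} (h : YRel d n a b) :
    RingQuot.mkAlgHom K (YTLRel d n) a = RingQuot.mkAlgHom K (YTLRel d n) b :=
  RingQuot.mkAlgHom_rel K (.base h)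

lemma zg_eq_zero {i : ℕ} (hi : i = 0 ∨ n ≤ i) : zg d n i = 0 :=
  (mkAlgHom_eq_of_YRel (.gjunk i hi)).trans (map_zero _)

lemma zt_eq_zero {p : ℕ} (hp : p = 0 ∨ n < p) : zt d n p = 0 :=
  (mkAlgHom_eq_of_YRel (.tjunk p hp)).trans (map_zero _)

lemma ytlRelations_YTL (d n : ℕ) :
    YTLRelations d n uu (fun i => zg d n (i + 1)) (fun p => zt d n (p + 1)) where
  comm i j hij hj := by
    simpa only [commute_iff_eq, zg, map_mul] using mkAlgHom_eq_of_YRel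
      (.commute (i + 1) (j + 1) (by omega) (by omega) (by omega) (by omega) (by omega))
  braid i hi := by
    simpa only [zg, zt, map_mul] using mkAlgHom_eq_of_YRel (.braid (i + 1) (by omega) (by omega))
  tcomm p hp q hq := by
    simpa only [commute_iff_eq, zt, map_mul] using mkAlgHom_eq_of_YRel
      (.tcomm (p + 1) (q + 1) (by omega) (by omega) (by omega) (by omega))
  tg i p hi hp := by
    simpa only [zg, zt, map_mul, swapIdx_succ] using mkAlgHom_eq_of_YRel
      (.tg (i + 1) (p + 1) (by omega) (by omega) (by omega) (by omega))
  tpow p hp := by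
    simpa only [zg, zt, map_pow, map_one] using
      mkAlgHom_eq_of_YRel (.torder (p + 1) (by omega) (by omega))
  quad i hi := by
    simpa only [zg, zt, map_pow, map_add, map_one, map_smul, map_mul, ef, eElt, map_sum, sq] using
      mkAlgHom_eq_of_YRel (.quad (i + 1) (by omega) (by omega))
  tl i hi := by
    simpa only [zg, zt, map_add, map_mul, map_one, map_zero] using
      RingQuot.mkAlgHom_rel K (YTLRel.tl (d := d) (n := n) (i + 1) (by omega) (by omega))

lemma adjoin_generators_YTL (d n : ℕ) :
    Algebra.adjoin K (generators n (fun i => zg d n (i + 1)) (fun p => zt d n (p + 1))) = ⊤ := by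
  set N := Algebra.adjoin K (generators n (fun i => zg d n (i + 1)) (fun p => zt d n (p + 1)))
  have hg (i : ℕ) : zg d n i ∈ N := by
    by_cases hi : i = 0 ∨ n ≤ i
    · exact zg_eq_zero (d := d) hi ▸ zero_mem N
    · exact Algebra.subset_adjoin (.inl ⟨i - 1, by omega, by
        simp only [Nat.sub_add_cancel (show 1 ≤ i by omega)]⟩)
  have ht (p : ℕ) : zt d n p ∈ N := by
    by_cases hp : p = 0 ∨ n < p
    · exact zt_eq_zero (d := d) hp ▸ zero_mem N
    · exact Algebra.subset_adjoin (.inr ⟨p - 1, by omega, by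
        simp only [Nat.sub_add_cancel (show 1 ≤ p by omega)]⟩)
  refine (Algebra.eq_top_iff).2 fun x => ?_
  obtain ⟨x, rfl⟩ := RingQuot.mkAlgHom_surjective K (YTLRel d n) x
  induction x using FreeAlgebra.induction with
  | grade0 r =>
    rw [AlgHom.commutes]
    exact Subalgebra.algebraMap_mem _ r
  | grade1 x =>
    rcases x with i | p
    exacts [hg i, ht p]
  | mul a b ha hb => rw [map_mul]; exact mul_mem ha hb
  | add a b ha hb => rw [map_add]; exact add_mem ha hb

/-- The homomorphism from the free algebra sending its generators `g_{i + 1}` and `t_{p + 1}` to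
`g i` and `t p`, and those with indices out of range to `0`. -/
def freeLift (n : ℕ) (g t : ℕ → B) : FA →ₐ[K] B :=
  FreeAlgebra.lift K <| Sum.elim (fun i => if 1 ≤ i ∧ i < n then g (i - 1) else 0)
    fun p => if 1 ≤ p ∧ p ≤ n then t (p - 1) else 0

lemma freeLift_Gf {i : ℕ} (hi : i + 1 < n) : freeLift n g t (Gf (i + 1)) = g i := by
  simp [freeLift, Gf, hi]

lemma freeLift_Tf {p : ℕ} (hp : p < n) : freeLift n g t (Tf (p + 1)) = t p := by
  simp [freeLift, Tf, Nat.succ_le_of_lt hp]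

lemma freeLift_ef {i : ℕ} (hi : i + 1 < n) : freeLift n g t (ef d (i + 1)) = eElt K d t i := by
  simp only [ef, eElt, map_smul, map_sum, map_mul, map_pow,
    freeLift_Tf (show i < n by omega), freeLift_Tf hi]

namespace YTLRelations

variable (h : YTLRelations d n uu g t)
include h

lemma freeLift_eq_of_YRel {x y : FA} (hxy : YRel d n x y) :
    freeLift n g t x = freeLift n g t y := by
  induction hxy with
  | commute i j hi hin hj hjn hij =>
    obtain ⟨i, rfl⟩ := Nat.exists_eq_add_of_le' hi
    obtain ⟨j, rfl⟩ := Nat.exists_eq_add_of_le' hj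
    rw [map_mul, map_mul, freeLift_Gf hin, freeLift_Gf hjn]
    rcases hij with hij | hij
    · exact h.comm i j (by omega) hjn
    · exact (h.comm j i (by omega) hin).symm
  | braid i hi hin =>
    obtain ⟨i, rfl⟩ := Nat.exists_eq_add_of_le' hi
    simpa only [map_mul, freeLift_Gf (show i + 1 < n by omega),
      freeLift_Gf (show i + 1 + 1 < n by omega)] using h.braid i (by omega)
  | tcomm i j hi hin hj hjn =>
    obtain ⟨i, rfl⟩ := Nat.exists_eq_add_of_le' hi
    obtain ⟨j, rfl⟩ := Nat.exists_eq_add_of_le' hj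
    simpa only [map_mul, freeLift_Tf hin, freeLift_Tf hjn] using (h.tcomm i hin j hjn).eq
  | tg i j hi hin hj hjn =>
    obtain ⟨i, rfl⟩ := Nat.exists_eq_add_of_le' hi
    obtain ⟨j, rfl⟩ := Nat.exists_eq_add_of_le' hj
    simpa only [map_mul, swapIdx_succ, freeLift_Gf hin, freeLift_Tf hjn,
      freeLift_Tf (sw_lt hin hjn)] using h.tg i j hin hjn
  | torder j hj hjn =>
    obtain ⟨j, rfl⟩ := Nat.exists_eq_add_of_le' hj
    simpa only [map_pow, map_one, freeLift_Tf hjn] using h.tpow j hjn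
  | quad i hi hin =>
    obtain ⟨i, rfl⟩ := Nat.exists_eq_add_of_le' hi
    simpa only [map_pow, map_add, map_one, map_smul, map_mul, freeLift_ef hin, freeLift_Gf hin, sq]
      using h.quad i hin
  | gjunk i hi =>
    simp only [freeLift, Gf, FreeAlgebra.lift_ι_apply, Sum.elim_inl, map_zero]
    exact if_neg (by omega)
  | tjunk j hj =>
    simp only [freeLift, Tf, FreeAlgebra.lift_ι_apply, Sum.elim_inr, map_zero]
    exact if_neg (by omega)

lemma freeLift_eq_of_YTLRel {x y : FA} (hxy : YTLRel d n x y) :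
    freeLift n g t x = freeLift n g t y := by
  rcases hxy with hxy | ⟨i, hi, hin⟩
  · exact h.freeLift_eq_of_YRel hxy
  · obtain ⟨i, rfl⟩ := Nat.exists_eq_add_of_le' hi
    simpa only [map_add, map_mul, map_one, map_zero, freeLift_Gf (show i + 1 < n by omega),
      freeLift_Gf (show i + 1 + 1 < n by omega)] using h.tl i (by omega)

end YTLRelations

lemma isYokonumaTemperleyLieb_YTL (d n : ℕ) :
    IsYokonumaTemperleyLieb d n uu (fun i => zg d n (i + 1)) fun p => zt d n (p + 1) where
  relations := ytlRelations_YTL d n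
  adjoin_eq_top := adjoin_generators_YTL d n
  exists_algHom {_} _ _ _ _ h :=
    ⟨RingQuot.liftAlgHom K ⟨_, fun _ _ => h.freeLift_eq_of_YTLRel⟩,
      fun _ hi => (RingQuot.liftAlgHom_mkAlgHom_apply ..).trans (freeLift_Gf hi),
      fun _ hp => (RingQuot.liftAlgHom_mkAlgHom_apply ..).trans (freeLift_Tf hp)⟩

lemma uu_ne_zero : uu ≠ 0 := RatFunc.X_ne_zero

lemma uu_add_one_ne_zero : uu + 1 ≠ 0 := by
  have h : uu + 1 = algebraMap (Polynomial ℂ) K (X + C 1) := by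
    rw [map_add, RatFunc.algebraMap_X, RatFunc.algebraMap_C, map_one, uu]
  exact h ▸ RatFunc.algebraMap_ne_zero (X_add_C_ne_zero 1)

lemma exists_isPrimitiveRoot_K (hd : 1 ≤ d) : ∃ ζ : K, IsPrimitiveRoot ζ d :=
  ⟨_, (Complex.isPrimitiveRoot_exp d (by omega)).map_of_injective (algebraMap ℂ K).injective⟩

end Presentation

end

end YokonumaTL

theorem stmt17_general {F A : Type*} [Field F] [Ring A] [Algebra F A] {d n : ℕ} {ζ u : F}
    {g t : ℕ → A} (hd : 1 ≤ d) (hn : 1 ≤ n) (hζ : IsPrimitiveRoot ζ d) (hu : u ≠ 0)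
    (hu' : u + 1 ≠ 0) (h : YokonumaTL.IsYokonumaTemperleyLieb d n u g t) :
    FiniteDimensional F A ∧
    (Module.finrank F A : ℚ) =
      (d : ℚ) * ((n : ℚ) * (d : ℚ) - (n : ℚ) + (d : ℚ) + 1) / 2 * (catalan n : ℚ) -
        (d : ℚ) * ((d : ℚ) - 1) := by
  have : NeZero d := ⟨by omega⟩
  refine ⟨h.finiteDimensional hζ hu hu' hn, ?_⟩
  have hdim := congrArg (Nat.cast (R := ℚ)) (YokonumaTL.sum_weightDim d hn)
  rw [← h.finrank_eq_sum_weightDim hζ hu hu' hn, ← succ_mul_catalan_eq_centralBinom] at hdim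
  push_cast [Nat.cast_sub hd] at hdim
  linear_combination hdim / 2

theorem stmt17 (d n : ℕ) (hd : 1 ≤ d) (hn : 3 ≤ n) :
    FiniteDimensional K (YTL d n) ∧
    (Module.finrank K (YTL d n) : ℚ) =
      (d : ℚ) * ((n : ℚ) * (d : ℚ) - (n : ℚ) + (d : ℚ) + 1) / 2 * (catalan n : ℚ) -
        (d : ℚ) * ((d : ℚ) - 1) := by
  obtain ⟨ζ, hζ⟩ := YokonumaTL.exists_isPrimitiveRoot_K hd
  exact stmt17_general hd (by omega) hζ YokonumaTL.uu_ne_zero YokonumaTL.uu_add_one_ne_zero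
    (YokonumaTL.isYokonumaTemperleyLieb_YTL d n)
end

section
/- Let d≥1 and n≥3. The set S := { t_1^{r_1}⋯t_n^{r_n} · g_{(i,k)} : (i,k)∈𝔗_n, (r_1,…,r_n)∈{0,…,d−1}^n } spans the Yokonuma–Temperley–Lieb algebra YTL_{d,n}(u) as a ℂ(u)-vector space. -/
/-- The set 𝔗ₙ, encoded as lists of pairs `(i_j, k_j)`:
entries satisfy `1 ≤ i_j - k_j` (i.e. `k_j < i_j`) and `i_j ≤ n-1` (i.e. `i_j + 1 ≤ n`),
the `i_j` are strictly increasing, and the `i_j - k_j` are strictly increasing. -/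
def IsTT (n : ℕ) (l : List (ℕ × ℕ)) : Prop :=
  (∀ p ∈ l, p.2 < p.1 ∧ p.1 + 1 ≤ n) ∧
  List.Chain' (· < ·) (l.map Prod.fst) ∧
  List.Chain' (· < ·) (l.map (fun p => p.1 - p.2))

/-- The set of integers covered by the intervals `[i_j - k_j, i_j]`. -/
def cov (l : List (ℕ × ℕ)) : Finset ℕ :=
  l.foldr (fun p s => Finset.Icc (p.1 - p.2) p.1 ∪ s) ∅

/-- The weight of an element of 𝔗ₙ. -/
def wt (l : List (ℕ × ℕ)) : ℕ := (cov l).card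


/-- The "cycle" `g_i g_{i-1} ⋯ g_{i-k}` in `YTL_{d,n}(u)`, for a pair `p = (i, k)`. -/
noncomputable def gcycle (d n : ℕ) (p : ℕ × ℕ) : YTL d n :=
  ((List.range (p.2 + 1)).map fun s => zg d n (p.1 - s)).prod

/-- The element `g_{(i,k)} = g_{i₁,k₁} g_{i₂,k₂} ⋯ g_{i_p,k_p}` of `YTL_{d,n}(u)`. -/
noncomputable def gword (d n : ℕ) (l : List (ℕ × ℕ)) : YTL d n :=
  (l.map (gcycle d n)).prod

/-- The "framing" monomial `t₁^{r 1} t₂^{r 2} ⋯ t_n^{r n}` in `YTL_{d,n}(u)`. -/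
noncomputable def tmon (d n : ℕ) (r : ℕ → ℕ) : YTL d n :=
  ((List.range' 1 n).map fun j => zt d n j ^ r j).prod

/-!
Assign to `g_i` degree one and to `t_j` degree zero. Modulo terms of smaller degree the letters
satisfy `g_i² ≡ 0` and `g_i g_{i±1} g_i ≡ 0`, and the `t_j` can be moved to the left of every word.
Multiplying `g_i` from the left into a product of descending cycles in Jones normal form therefore
either vanishes modulo smaller degree or yields such a product again: `g_i` commutes past the cycles
lying entirely below `i - 1` and then starts a new cycle or extends the next one. By induction on
the degree, the normal words generate the algebra over the commutative subalgebra of the `t_j`,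
which is in turn spanned by the framing monomials.
-/

section DescendingProducts

/-- The descending product `g_{b+m-1} ⋯ g_{b+1} g_b` of `m` consecutive letters. It is indexed by
its smallest letter, so that no truncated subtraction occurs. -/
def descProd {M : Type*} [Monoid M] (g : ℕ → M) (b : ℕ) : ℕ → M
  | 0 => 1
  | m + 1 => g (b + m) * descProd g b m

theorem descProd_eq_zero {M₀ : Type*} [MonoidWithZero M₀] {g : ℕ → M₀} {b i m : ℕ} (hbi : b ≤ i)
    (him : i < b + m) (hi : g i = 0) : descProd g b m = 0 := by
  induction m with
  | zero => omega
  | succ m ih =>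
    rcases eq_or_ne i (b + m) with rfl | hne
    · rw [descProd, hi, zero_mul]
    · rw [descProd, ih (by omega), mul_zero]

theorem commute_descProd {M : Type*} [Monoid M] {g : ℕ → M} {x : M} {b m : ℕ}
    (h : ∀ j, b ≤ j → j < b + m → Commute x (g j)) : Commute x (descProd g b m) := by
  induction m with
  | zero => exact Commute.one_right x
  | succ m ih => exact (h _ (by omega) (by omega)).mul_right (ih fun j hbj hj => h j hbj (by omega))

end DescendingProducts

section JonesNormalForm

/-- The product of descending cycles encoded by `l`, where `(b, k)` stands for the cycle
`g_{b+k} ⋯ g_{b+1} g_b`; in the notation of `𝔗ₙ` this is the pair `(i, k)` with `i = b + k`. -/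
def jonesProd {M : Type*} [Monoid M] (g : ℕ → M) (l : List (ℕ × ℕ)) : M :=
  (l.map fun p => descProd g p.1 (p.2 + 1)).prod

/-- Jones normal form: the smallest and the largest letters of the successive cycles are strictly
increasing. Cycles are encoded as in `jonesProd`. -/
def IsJonesNormal (l : List (ℕ × ℕ)) : Prop :=
  l.IsChain fun p q => p.1 < q.1 ∧ p.1 + p.2 < q.1 + q.2

/-- The number of letters of a product of cycles encoded as in `jonesProd`. -/
def jonesLength (l : List (ℕ × ℕ)) : ℕ :=
  (l.map fun p => p.2 + 1).sum

/-- The normal form of a letter `i` times the product of cycles encoded by `l`, provided that this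
product does not reduce to shorter words; the value has no meaning otherwise. -/
def insertLetter (i : ℕ) : List (ℕ × ℕ) → List (ℕ × ℕ)
  | [] => [(i, 0)]
  | p :: l =>
    if i < p.1 then (i, 0) :: p :: l
    else if i = p.1 + p.2 + 1 then (p.1, p.2 + 1) :: l
    else p :: insertLetter i l

theorem jonesProd_cons {M : Type*} [Monoid M] (g : ℕ → M) (p : ℕ × ℕ) (l : List (ℕ × ℕ)) :
    jonesProd g (p :: l) = descProd g p.1 (p.2 + 1) * jonesProd g l := by
  rw [jonesProd, List.map_cons, List.prod_cons, jonesProd]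

theorem jonesProd_singleton_cons {M : Type*} [Monoid M] (g : ℕ → M) (i : ℕ) (l : List (ℕ × ℕ)) :
    jonesProd g ((i, 0) :: l) = g i * jonesProd g l := by
  rw [jonesProd_cons, descProd, descProd, add_zero, mul_one]

theorem jonesLength_cons (p : ℕ × ℕ) (l : List (ℕ × ℕ)) :
    jonesLength (p :: l) = p.2 + 1 + jonesLength l := by
  rw [jonesLength, List.map_cons, List.sum_cons, jonesLength]

theorem jonesLength_insertLetter (i : ℕ) (l : List (ℕ × ℕ)) :
    jonesLength (insertLetter i l) = jonesLength l + 1 := by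
  induction l with
  | nil => rfl
  | cons p l ih =>
    rw [insertLetter]
    split_ifs <;> simp only [jonesLength_cons, ih] <;> omega

theorem IsJonesNormal.cons_insertLetter {i : ℕ} {p : ℕ × ℕ} {l : List (ℕ × ℕ)}
    (hl : IsJonesNormal (p :: l)) (hi : p.1 + p.2 < i) (hins : IsJonesNormal (insertLetter i l)) :
    IsJonesNormal (p :: insertLetter i l) := by
  refine List.isChain_cons.2 ⟨?_, hins⟩
  cases l with
  | nil =>
    simp only [insertLetter, List.head?_cons, Option.mem_some_iff, forall_eq']
    omega
  | cons q l =>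
    have hpq := (List.isChain_cons_cons.1 hl).1
    rw [insertLetter]
    split_ifs <;> simp only [List.head?_cons, Option.mem_some_iff, forall_eq'] <;> omega

end JonesNormalForm

section WordFiltration

variable {R A : Type*} [CommSemiring R] [Semiring A] [Algebra R A]

/-- The left `F`-submodule of `A` generated by the words of length at most `m` in the `g_i`. -/
def wordFiltration (F : Subalgebra R A) (g : ℕ → A) (m : ℕ) : Submodule F A :=
  Submodule.span F ((fun w : List ℕ => (w.map g).prod) '' {w | w.length ≤ m})

/-- Letters `g_i` which satisfy the Temperley–Lieb relations up to shorter words, over a subalgebra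
`F` of coefficients that can be moved to the left of each letter. -/
structure IsTemperleyLiebSystem (F : Subalgebra R A) (g : ℕ → A) : Prop where
  exists_mul_eq : ∀ i, ∀ f ∈ F, ∃ f' ∈ F, g i * f = f' * g i
  commute : ∀ {i j}, i + 1 < j → Commute (g i) (g j)
  mul_self_mem : ∀ i, g i * g i ∈ wordFiltration F g 1
  mul_succ_mul_mem : ∀ i, g i * g (i + 1) * g i ∈ wordFiltration F g 2
  succ_mul_mul_mem : ∀ i, g (i + 1) * g i * g (i + 1) ∈ wordFiltration F g 2

variable {F : Subalgebra R A} {g : ℕ → A}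

theorem list_prod_mem_wordFiltration (w : List ℕ) :
    (w.map g).prod ∈ wordFiltration F g w.length :=
  Submodule.subset_span ⟨w, le_refl w.length, rfl⟩

theorem wordFiltration_mono : Monotone (wordFiltration F g) := fun _ _ hab =>
  Submodule.span_mono (Set.image_mono fun _ hw => le_trans hw hab)

theorem mem_wordFiltration_one (i : ℕ) : g i ∈ wordFiltration F g 1 := by
  simpa using list_prod_mem_wordFiltration (F := F) (g := g) [i]

theorem coeff_mul_mem_wordFiltration {f x : A} {m : ℕ} (hf : f ∈ F)
    (hx : x ∈ wordFiltration F g m) : f * x ∈ wordFiltration F g m :=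
  Submodule.smul_mem _ (⟨f, hf⟩ : F) hx

theorem coeff_mem_wordFiltration_zero {f : A} (hf : f ∈ F) : f ∈ wordFiltration F g 0 := by
  simpa using coeff_mul_mem_wordFiltration hf (list_prod_mem_wordFiltration (g := g) [])

namespace IsTemperleyLiebSystem

theorem mul_mem_of_mem_span (h : IsTemperleyLiebSystem F g) {i : ℕ} {s : Set A}
    {N : Submodule F A} (hs : ∀ x ∈ s, g i * x ∈ N) {x : A} (hx : x ∈ Submodule.span F s) :
    g i * x ∈ N := by
  induction hx using Submodule.span_induction with
  | mem x hx => exact hs x hx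
  | zero => simp only [mul_zero, zero_mem]
  | add x y _ _ hx hy => rw [mul_add]; exact add_mem hx hy
  | smul f x _ hx =>
    obtain ⟨f', hf', heq⟩ := h.exists_mul_eq i f f.2
    rw [Subalgebra.smul_def, smul_eq_mul, ← mul_assoc, heq, mul_assoc]
    exact N.smul_mem ⟨f', hf'⟩ hx

theorem letter_mul_mem (h : IsTemperleyLiebSystem F g) (i : ℕ) {m : ℕ} {x : A}
    (hx : x ∈ wordFiltration F g m) : g i * x ∈ wordFiltration F g (m + 1) := by
  refine h.mul_mem_of_mem_span ?_ hx
  rintro _ ⟨w, hw, rfl⟩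
  exact Submodule.subset_span ⟨i :: w, Nat.succ_le_succ hw, List.prod_cons⟩

theorem list_prod_mul_mem (h : IsTemperleyLiebSystem F g) (w : List ℕ) {m : ℕ} {x : A}
    (hx : x ∈ wordFiltration F g m) :
    (w.map g).prod * x ∈ wordFiltration F g (w.length + m) := by
  induction w with
  | nil => simpa using hx
  | cons i w ih =>
    rw [List.map_cons, List.prod_cons, mul_assoc, List.length_cons, Nat.add_right_comm]
    exact h.letter_mul_mem i ih

theorem mul_mem (h : IsTemperleyLiebSystem F g) {a b : ℕ} {x y : A}
    (hx : x ∈ wordFiltration F g a) (hy : y ∈ wordFiltration F g b) :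
    x * y ∈ wordFiltration F g (a + b) := by
  induction hx using Submodule.span_induction with
  | mem x hx =>
    obtain ⟨w, hw, rfl⟩ := hx
    exact wordFiltration_mono (Nat.add_le_add_right hw b) (h.list_prod_mul_mem w hy)
  | zero => simp only [zero_mul, zero_mem]
  | add x x' _ _ hx hx' => rw [add_mul]; exact add_mem hx hx'
  | smul f x _ hx => rw [smul_mul_assoc]; exact Submodule.smul_mem _ f hx

theorem exists_mem_wordFiltration (h : IsTemperleyLiebSystem F g) {x : A}
    (hx : x ∈ Algebra.adjoin R ((F : Set A) ∪ Set.range g)) : ∃ m, x ∈ wordFiltration F g m := by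
  induction hx using Algebra.adjoin_induction with
  | mem x hx =>
    rcases hx with hx | ⟨i, rfl⟩
    · exact ⟨0, coeff_mem_wordFiltration_zero hx⟩
    · exact ⟨1, mem_wordFiltration_one i⟩
  | algebraMap r => exact ⟨0, coeff_mem_wordFiltration_zero (algebraMap_mem F r)⟩
  | add x y _ _ hx hy =>
    obtain ⟨a, ha⟩ := hx
    obtain ⟨b, hb⟩ := hy
    exact ⟨max a b, add_mem (wordFiltration_mono (le_max_left a b) ha)
      (wordFiltration_mono (le_max_right a b) hb)⟩
  | mul x y _ _ hx hy =>
    obtain ⟨a, ha⟩ := hx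
    obtain ⟨b, hb⟩ := hy
    exact ⟨a + b, h.mul_mem ha hb⟩

theorem descProd_mem (h : IsTemperleyLiebSystem F g) (b m : ℕ) :
    descProd g b m ∈ wordFiltration F g m := by
  induction m with
  | zero => exact list_prod_mem_wordFiltration []
  | succ m ih => exact h.letter_mul_mem _ ih

theorem jonesProd_mem (h : IsTemperleyLiebSystem F g) (l : List (ℕ × ℕ)) :
    jonesProd g l ∈ wordFiltration F g (jonesLength l) := by
  induction l with
  | nil => exact list_prod_mem_wordFiltration []
  | cons p l ih =>
    rw [jonesProd_cons, jonesLength_cons]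
    exact h.mul_mem (h.descProd_mem _ _) ih

theorem letter_commute_descProd (h : IsTemperleyLiebSystem F g) {b i m : ℕ} (hi : b + m < i) :
    Commute (g i) (descProd g b m) :=
  commute_descProd fun _ _ hj => (h.commute (by omega)).symm

theorem letter_mul_descProd_mem (h : IsTemperleyLiebSystem F g) {b i m : ℕ} (hbi : b ≤ i)
    (him : i < b + m) : g i * descProd g b m ∈ wordFiltration F g m := by
  induction m with
  | zero => omega
  | succ m ih =>
    rw [descProd]
    obtain rfl | heq | hlt : i = b + m ∨ i + 1 = b + m ∨ i + 1 < b + m := by omega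
    · rw [← mul_assoc, add_comm m 1]
      exact h.mul_mem (h.mul_self_mem _) (h.descProd_mem b m)
    · obtain ⟨k, rfl⟩ : ∃ k, m = k + 1 := ⟨m - 1, by omega⟩
      obtain rfl : i = b + k := by omega
      rw [descProd, ← mul_assoc, ← mul_assoc, ← add_assoc, add_comm k 1, add_right_comm 1 k 1]
      exact h.mul_mem (h.mul_succ_mul_mem _) (h.descProd_mem b k)
    · rw [← mul_assoc, (h.commute hlt).eq, mul_assoc]
      exact h.letter_mul_mem _ (ih (by omega))

theorem letter_mul_jonesProd_mem_of_top_eq (h : IsTemperleyLiebSystem F g) {p q : ℕ × ℕ}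
    (hpq : q.1 + q.2 = p.1 + p.2 + 1) (l : List (ℕ × ℕ)) :
    g (p.1 + p.2 + 1) * jonesProd g (p :: q :: l) ∈
      wordFiltration F g (jonesLength (p :: q :: l)) := by
  set c := p.1 + p.2 with hc
  have hcomm : g (c + 1) * descProd g p.1 p.2 = descProd g p.1 p.2 * g (c + 1) :=
    (h.letter_commute_descProd (by omega)).eq
  have hbraid : g (c + 1) * jonesProd g (p :: q :: l) =
      g (c + 1) * g c * g (c + 1) *
        (descProd g p.1 p.2 * (descProd g q.1 q.2 * jonesProd g l)) := by
    simp only [jonesProd_cons, descProd, ← hc, hpq, mul_assoc]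
    rw [← mul_assoc (g (c + 1)) (descProd g p.1 p.2), hcomm, mul_assoc]
  rw [hbraid]
  refine wordFiltration_mono ?_ (h.mul_mem (h.succ_mul_mul_mem c)
    (h.mul_mem (h.descProd_mem _ _) (h.mul_mem (h.descProd_mem _ _) (h.jonesProd_mem l))))
  simp only [jonesLength_cons]
  omega

theorem letter_mul_jonesProd (h : IsTemperleyLiebSystem F g) (i : ℕ) {l : List (ℕ × ℕ)}
    (hl : IsJonesNormal l) :
    (IsJonesNormal (insertLetter i l) ∧ g i * jonesProd g l = jonesProd g (insertLetter i l)) ∨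
      g i * jonesProd g l ∈ wordFiltration F g (jonesLength l) := by
  induction l with
  | nil => exact .inl ⟨List.isChain_singleton _, (jonesProd_singleton_cons g i []).symm⟩
  | cons p l ih =>
    obtain hlt | ⟨hle, hge⟩ | rfl | hgt : i < p.1 ∨ (p.1 ≤ i ∧ i ≤ p.1 + p.2) ∨
      i = p.1 + p.2 + 1 ∨ p.1 + p.2 + 1 < i := by omega
    · left
      rw [insertLetter, if_pos hlt, jonesProd_singleton_cons]
      exact ⟨List.isChain_cons_cons.2 ⟨⟨hlt, by omega⟩, hl⟩, rfl⟩
    · right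
      rw [jonesProd_cons, jonesLength_cons, ← mul_assoc]
      exact h.mul_mem (h.letter_mul_descProd_mem hle (by omega)) (h.jonesProd_mem l)
    · by_cases htop : ∃ q ∈ l.head?, q.1 + q.2 = p.1 + p.2 + 1
      · obtain ⟨q, hq, hpq⟩ := htop
        obtain ⟨l, rfl⟩ := List.head?_eq_some_iff.1 hq
        exact .inr (h.letter_mul_jonesProd_mem_of_top_eq hpq l)
      · left
        push Not at htop
        rw [insertLetter, if_neg (by omega), if_pos rfl, jonesProd_cons, jonesProd_cons,
          ← mul_assoc]
        obtain ⟨hhead, hl⟩ := List.isChain_cons.1 hl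
        refine ⟨List.isChain_cons.2 ⟨fun q hq => ?_, hl⟩, rfl⟩
        have := hhead q hq
        have := htop q hq
        constructor <;> omega
    · have hcomm : g i * jonesProd g (p :: l) =
          descProd g p.1 (p.2 + 1) * (g i * jonesProd g l) := by
        rw [jonesProd_cons, ← mul_assoc, (h.letter_commute_descProd (by omega)).eq, mul_assoc]
      rw [insertLetter, if_neg (by omega), if_neg (by omega), hcomm]
      rcases ih hl.tail with ⟨hins, heq⟩ | hlow
      · exact .inl ⟨hl.cons_insertLetter (by omega) hins, by rw [heq, jonesProd_cons]⟩
      · rw [jonesLength_cons]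
        exact .inr (h.mul_mem (h.descProd_mem _ _) hlow)

theorem wordFiltration_le_span_jonesProd (h : IsTemperleyLiebSystem F g) (m : ℕ) :
    wordFiltration F g m ≤
      Submodule.span F (jonesProd g '' {l | IsJonesNormal l ∧ jonesLength l ≤ m}) := by
  induction m with
  | zero =>
    refine Submodule.span_mono ?_
    rintro _ ⟨w, hw, rfl⟩
    rw [List.length_eq_zero_iff.1 (Nat.le_zero.1 hw)]
    exact ⟨[], ⟨List.isChain_nil, le_rfl⟩, rfl⟩
  | succ m ih =>
    have hmono : Submodule.span F (jonesProd g '' {l | IsJonesNormal l ∧ jonesLength l ≤ m}) ≤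
        Submodule.span F (jonesProd g '' {l | IsJonesNormal l ∧ jonesLength l ≤ m + 1}) :=
      Submodule.span_mono (Set.image_mono fun l hl => ⟨hl.1, hl.2.trans m.le_succ⟩)
    refine Submodule.span_le.2 ?_
    rintro _ ⟨_ | ⟨i, w⟩, hw, rfl⟩
    · exact Submodule.subset_span ⟨[], ⟨List.isChain_nil, Nat.zero_le _⟩, rfl⟩
    have hw' : (w.map g).prod ∈ wordFiltration F g m :=
      wordFiltration_mono (Nat.le_of_succ_le_succ hw) (list_prod_mem_wordFiltration w)
    simp only [List.map_cons, List.prod_cons]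
    refine h.mul_mem_of_mem_span ?_ (ih hw')
    rintro _ ⟨l, ⟨hl, hlen⟩, rfl⟩
    rcases h.letter_mul_jonesProd i hl with ⟨hins, heq⟩ | hlow
    · refine Submodule.subset_span ⟨_, ⟨hins, ?_⟩, heq.symm⟩
      rw [jonesLength_insertLetter]
      exact Nat.succ_le_succ hlen
    · exact hmono (ih (wordFiltration_mono hlen hlow))

theorem span_jonesProd_eq_top (h : IsTemperleyLiebSystem F g)
    (hgen : Algebra.adjoin R ((F : Set A) ∪ Set.range g) = ⊤) :
    Submodule.span F (jonesProd g '' {l | IsJonesNormal l}) = ⊤ := by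
  refine eq_top_iff.2 fun x _ => ?_
  obtain ⟨m, hm⟩ := h.exists_mem_wordFiltration (hgen ▸ Algebra.mem_top : x ∈ _)
  exact Submodule.span_mono (Set.image_mono fun _ hl => hl.1)
    (h.wordFiltration_le_span_jonesProd m hm)

end IsTemperleyLiebSystem

end WordFiltration

section Adjoin

open scoped Pointwise

variable {R A : Type*} [CommSemiring R] [Semiring A] [Algebra R A]

theorem exists_mul_eq_mul_of_mem_adjoin {s : Set A} {x : A}
    (hs : ∀ y ∈ s, ∃ z ∈ Algebra.adjoin R s, x * y = z * x) {y : A}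
    (hy : y ∈ Algebra.adjoin R s) : ∃ z ∈ Algebra.adjoin R s, x * y = z * x := by
  induction hy using Algebra.adjoin_induction with
  | mem y hy => exact hs y hy
  | algebraMap r => exact ⟨_, algebraMap_mem _ r, (Algebra.commutes r x).symm⟩
  | add y y' _ _ hy hy' =>
    obtain ⟨z, hz, hyz⟩ := hy
    obtain ⟨z', hz', hyz'⟩ := hy'
    exact ⟨z + z', add_mem hz hz', by rw [mul_add, add_mul, hyz, hyz']⟩
  | mul y y' _ _ hy hy' =>
    obtain ⟨z, hz, hyz⟩ := hy
    obtain ⟨z', hz', hyz'⟩ := hy'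
    exact ⟨z * z', mul_mem hz hz', by rw [← mul_assoc, hyz, mul_assoc, hyz', mul_assoc]⟩

theorem mem_of_add_eq_zero {R M : Type*} [Ring R] [AddCommGroup M] [Module R M]
    {N : Submodule R M} {x y : M} (hxy : x + y = 0) (hy : y ∈ N) : x ∈ N :=
  eq_neg_of_add_eq_zero_left hxy ▸ N.neg_mem hy

theorem mem_span_mul_of_mem_span {F : Subalgebra R A} {s t : Set A}
    (hF : Subalgebra.toSubmodule F ≤ Submodule.span R s) {x : A} (hx : x ∈ Submodule.span F t) :
    x ∈ Submodule.span R (s * t) := by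
  rw [← Submodule.span_mul_span]
  induction hx using Submodule.closure_induction with
  | zero => exact zero_mem _
  | add x y _ _ hx hy => exact add_mem hx hy
  | smul_mem f x hx => exact Submodule.mul_mem_mul (hF f.2) (Submodule.subset_span hx)

end Adjoin

theorem mul_prod_map_pow {ι M : Type*} [DecidableEq ι] [Monoid M] {t : ι → M} {j : ι}
    (ht : ∀ i, Commute (t j) (t i)) (r : ι → ℕ) {L : List ι} (hL : L.Nodup) (hj : j ∈ L) :
    t j * (L.map fun k => t k ^ r k).prod =
      (L.map fun k => t k ^ Function.update r j (r j + 1) k).prod := by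
  induction L with
  | nil => exact absurd hj List.not_mem_nil
  | cons i L ih =>
    obtain ⟨hiL, hL⟩ := List.nodup_cons.1 hL
    simp only [List.map_cons, List.prod_cons]
    rcases List.mem_cons.1 hj with rfl | hjL
    · have hrest : ∀ k ∈ L, t k ^ Function.update r j (r j + 1) k = t k ^ r k := fun k hk => by
        rw [Function.update_of_ne (ne_of_mem_of_not_mem hk hiL)]
      rw [List.map_congr_left hrest, Function.update_self, ← mul_assoc, pow_succ']
    · rw [← ih hL hjL, Function.update_of_ne (ne_of_mem_of_not_mem hjL hiL).symm, ← mul_assoc,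
        ((ht i).pow_right (r i)).eq, mul_assoc]

section Relations

variable {d n : ℕ}

theorem YTLRel.mkAlgHom_eq {a b : FA} (h : YTLRel d n a b) :
    RingQuot.mkAlgHom K (YTLRel d n) a = RingQuot.mkAlgHom K (YTLRel d n) b :=
  RingQuot.mkAlgHom_rel K h

theorem YRel.mkAlgHom_eq {a b : FA} (h : YRel d n a b) :
    RingQuot.mkAlgHom K (YTLRel d n) a = RingQuot.mkAlgHom K (YTLRel d n) b :=
  (YTLRel.base h).mkAlgHom_eq

theorem mkAlgHom_Gf (i : ℕ) : RingQuot.mkAlgHom K (YTLRel d n) (Gf i) = zg d n i := rfl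

theorem mkAlgHom_Tf (j : ℕ) : RingQuot.mkAlgHom K (YTLRel d n) (Tf j) = zt d n j := rfl

theorem zg_eq_zero {i : ℕ} (hi : i = 0 ∨ n ≤ i) : zg d n i = 0 := by
  simpa only [mkAlgHom_Gf, map_zero] using (YRel.gjunk (d := d) i hi).mkAlgHom_eq

theorem zt_eq_zero {j : ℕ} (hj : j = 0 ∨ n < j) : zt d n j = 0 := by
  simpa only [mkAlgHom_Tf, map_zero] using (YRel.tjunk (d := d) j hj).mkAlgHom_eq

theorem zg_commute {i j : ℕ} (hij : i + 1 < j) : Commute (zg d n i) (zg d n j) := by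
  by_cases hi : i = 0
  · rw [zg_eq_zero (.inl hi)]; exact Commute.zero_left _
  by_cases hj : n ≤ j
  · rw [zg_eq_zero (.inr hj)]; exact Commute.zero_right _
  have hrel := YRel.commute (d := d) (n := n) i j (by omega) (by omega) (by omega) (by omega)
    (.inl hij)
  simpa only [commute_iff_eq, map_mul, mkAlgHom_Gf] using hrel.mkAlgHom_eq

theorem zt_commute (i j : ℕ) : Commute (zt d n i) (zt d n j) := by
  by_cases hi : i = 0 ∨ n < i
  · rw [zt_eq_zero hi]; exact Commute.zero_left _
  by_cases hj : j = 0 ∨ n < j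
  · rw [zt_eq_zero hj]; exact Commute.zero_right _
  have hrel := YRel.tcomm (d := d) (n := n) i j (by omega) (by omega) (by omega) (by omega)
  simpa only [commute_iff_eq, map_mul, mkAlgHom_Tf] using hrel.mkAlgHom_eq

theorem zt_pow_eq_one {j : ℕ} (hj : 1 ≤ j) (hjn : j ≤ n) : zt d n j ^ d = 1 := by
  simpa only [map_pow, map_one, mkAlgHom_Tf] using
    (YRel.torder (d := d) (n := n) j hj hjn).mkAlgHom_eq

theorem zt_mul_zg (i j : ℕ) : zt d n j * zg d n i = zg d n i * zt d n (swapIdx i j) := by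
  by_cases hi : i = 0 ∨ n ≤ i
  · rw [zg_eq_zero hi, mul_zero, zero_mul]
  by_cases hj : j = 0 ∨ n < j
  · have hswap : swapIdx i j = j := by unfold swapIdx; split_ifs <;> omega
    rw [hswap, zt_eq_zero hj, mul_zero, zero_mul]
  simpa only [map_mul, mkAlgHom_Gf, mkAlgHom_Tf] using
    (YRel.tg (d := d) (n := n) i j (by omega) (by omega) (by omega) (by omega)).mkAlgHom_eq

theorem swapIdx_swapIdx (i j : ℕ) : swapIdx i (swapIdx i j) = j := by
  unfold swapIdx; split_ifs <;> omega

theorem zg_mul_zg_self {i : ℕ} (hi : 1 ≤ i) (hin : i + 1 ≤ n) :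
    zg d n i * zg d n i = 1 + (uu - 1) • RingQuot.mkAlgHom K (YTLRel d n) (ef d i) +
      (uu - 1) • (RingQuot.mkAlgHom K (YTLRel d n) (ef d i) * zg d n i) := by
  simpa only [map_add, map_smul, map_mul, map_one, sq, mkAlgHom_Gf] using
    (YRel.quad (d := d) (n := n) i hi hin).mkAlgHom_eq

theorem zg_braid (i : ℕ) :
    zg d n i * zg d n (i + 1) * zg d n i = zg d n (i + 1) * zg d n i * zg d n (i + 1) := by
  by_cases hi : i = 0
  · simp only [zg_eq_zero (.inl hi), zero_mul, mul_zero]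
  by_cases hin : n ≤ i + 1
  · simp only [zg_eq_zero (.inr hin), zero_mul, mul_zero]
  simpa only [map_mul, mkAlgHom_Gf] using
    (YRel.braid (d := d) (n := n) i (by omega) (by omega)).mkAlgHom_eq

theorem zg_temperleyLieb {i : ℕ} (hi : 1 ≤ i) (hin : i + 2 ≤ n) :
    zg d n i * zg d n (i + 1) * zg d n i + (zg d n i * zg d n (i + 1) +
      (zg d n (i + 1) * zg d n i + (zg d n i + (zg d n (i + 1) + 1)))) = 0 := by
  simpa only [map_add, map_mul, map_one, map_zero, mkAlgHom_Gf, add_assoc] using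
    (YTLRel.tl (d := d) i hi hin).mkAlgHom_eq

end Relations

section FramingAlgebra

variable (d n : ℕ)

/-- The framing subalgebra of `YTL_{d,n}(u)`, generated by the `t_j`. -/
noncomputable def framingAlgebra : Subalgebra K (YTL d n) :=
  Algebra.adjoin K (Set.range (zt d n))

variable {d n}

theorem zt_mem_framingAlgebra (j : ℕ) : zt d n j ∈ framingAlgebra d n :=
  Algebra.subset_adjoin ⟨j, rfl⟩

theorem mkAlgHom_ef_mem_framingAlgebra (i : ℕ) :
    RingQuot.mkAlgHom K (YTLRel d n) (ef d i) ∈ framingAlgebra d n := by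
  simp only [ef, map_smul, map_sum, map_mul, map_pow, mkAlgHom_Tf]
  exact Subalgebra.smul_mem _ (sum_mem fun s _ =>
    mul_mem (pow_mem (zt_mem_framingAlgebra i) s) (pow_mem (zt_mem_framingAlgebra (i + 1)) _)) _

theorem exists_zg_mul_eq (i : ℕ) {f : YTL d n} (hf : f ∈ framingAlgebra d n) :
    ∃ f' ∈ framingAlgebra d n, zg d n i * f = f' * zg d n i := by
  refine exists_mul_eq_mul_of_mem_adjoin ?_ hf
  rintro _ ⟨j, rfl⟩
  exact ⟨_, zt_mem_framingAlgebra (swapIdx i j), by rw [zt_mul_zg, swapIdx_swapIdx]⟩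

theorem zt_mul_tmon {j : ℕ} (hj : 1 ≤ j) (hjn : j ≤ n) (r : ℕ → ℕ) :
    zt d n j * tmon d n r = tmon d n (Function.update r j (r j + 1)) :=
  mul_prod_map_pow (zt_commute j) r List.nodup_range' (List.mem_range'_1.2 ⟨hj, by omega⟩)

theorem tmon_mod (r : ℕ → ℕ) : tmon d n (fun j => r j % d) = tmon d n r := by
  refine congrArg List.prod (List.map_congr_left fun j hj => ?_)
  obtain ⟨hj, hjn⟩ := List.mem_range'_1.1 hj
  exact (pow_eq_pow_mod (r j) (zt_pow_eq_one hj (by omega))).symm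

theorem framingAlgebra_le_span_tmon :
    Subalgebra.toSubmodule (framingAlgebra d n) ≤ Submodule.span K (Set.range (tmon d n)) := by
  rw [framingAlgebra, Algebra.adjoin_eq_span, Submodule.span_le]
  intro t ht
  induction ht using Submonoid.closure_induction_left with
  | one => exact Submodule.subset_span ⟨0, by simp [tmon]⟩
  | mul_left x hx y _ hy =>
    obtain ⟨j, rfl⟩ := hx
    have hmul : Submodule.span K (Set.range (tmon d n)) ≤
        (Submodule.span K (Set.range (tmon d n))).comap (LinearMap.mulLeft K (zt d n j)) := by
      rw [Submodule.span_le]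
      rintro _ ⟨r, rfl⟩
      by_cases hj : j = 0 ∨ n < j
      · simp [zt_eq_zero hj]
      · exact Submodule.subset_span ⟨_, (zt_mul_tmon (by omega) (by omega) r).symm⟩
    exact hmul hy

end FramingAlgebra

section TemperleyLiebSystem

variable {d n : ℕ}

theorem zg_mul_zg_self_mem (i : ℕ) :
    zg d n i * zg d n i ∈ wordFiltration (framingAlgebra d n) (zg d n) 1 := by
  by_cases hi : i = 0 ∨ n ≤ i
  · simp only [zg_eq_zero hi, mul_zero, zero_mem]
  have he : (uu - 1) • RingQuot.mkAlgHom K (YTLRel d n) (ef d i) ∈ framingAlgebra d n :=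
    Subalgebra.smul_mem _ (mkAlgHom_ef_mem_framingAlgebra i) _
  rw [zg_mul_zg_self (by omega) (by omega), ← smul_mul_assoc]
  exact add_mem
    (wordFiltration_mono zero_le_one (coeff_mem_wordFiltration_zero (add_mem (one_mem _) he)))
    (coeff_mul_mem_wordFiltration he (mem_wordFiltration_one i))

theorem zg_mul_zg_succ_mul_zg_mem (i : ℕ) :
    zg d n i * zg d n (i + 1) * zg d n i ∈
      wordFiltration (framingAlgebra d n) (zg d n) 2 := by
  by_cases hi : i = 0
  · simp only [zg_eq_zero (.inl hi), mul_zero, zero_mem]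
  by_cases hin : n ≤ i + 1
  · simp only [zg_eq_zero (.inr hin), mul_zero, zero_mul, zero_mem]
  have hword : ∀ w : List ℕ, w.length ≤ 2 →
      (w.map (zg d n)).prod ∈ wordFiltration (framingAlgebra d n) (zg d n) 2 := fun w hw =>
    wordFiltration_mono hw (list_prod_mem_wordFiltration w)
  have hrel := zg_temperleyLieb (d := d) (n := n) (i := i) (by omega) (by omega)
  refine mem_of_add_eq_zero (R := framingAlgebra d n) (M := YTL d n) hrel
    (add_mem ?_ (add_mem ?_ (add_mem ?_ (add_mem ?_ ?_))))
  · simpa using hword [i, i + 1] le_rfl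
  · simpa using hword [i + 1, i] le_rfl
  · simpa using hword [i] one_le_two
  · simpa using hword [i + 1] one_le_two
  · exact hword [] zero_le_two

theorem isTemperleyLiebSystem_zg : IsTemperleyLiebSystem (framingAlgebra d n) (zg d n) where
  exists_mul_eq i _ hf := exists_zg_mul_eq i hf
  commute := zg_commute
  mul_self_mem := zg_mul_zg_self_mem
  mul_succ_mul_mem := zg_mul_zg_succ_mul_zg_mem
  succ_mul_mul_mem i := zg_braid (d := d) (n := n) i ▸ zg_mul_zg_succ_mul_zg_mem i

theorem adjoin_framingAlgebra_union_range_zg :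
    Algebra.adjoin K ((framingAlgebra d n : Set (YTL d n)) ∪ Set.range (zg d n)) = ⊤ := by
  have hgen : Algebra.adjoin K
      (RingQuot.mkAlgHom K (YTLRel d n) '' Set.range (FreeAlgebra.ι K)) = ⊤ := by
    rw [← AlgHom.map_adjoin, FreeAlgebra.adjoin_range_ι, Algebra.map_top, AlgHom.range_eq_top]
    exact RingQuot.mkAlgHom_surjective K _
  refine top_unique (hgen ▸ Algebra.adjoin_mono ?_)
  rintro _ ⟨_, ⟨i | j, rfl⟩, rfl⟩
  · exact .inr ⟨i, rfl⟩
  · exact .inl (zt_mem_framingAlgebra j)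

theorem gcycle_eq_descProd (b k : ℕ) : gcycle d n (b + k, k) = descProd (zg d n) b (k + 1) := by
  induction k with
  | zero => simp [gcycle, descProd]
  | succ k ih =>
    rw [descProd, ← ih]
    simp [gcycle, List.range_succ_eq_map (n := k + 1), Function.comp_def, ← add_assoc]

theorem gword_map_eq_jonesProd (l : List (ℕ × ℕ)) :
    gword d n (l.map fun p => (p.1 + p.2, p.2)) = jonesProd (zg d n) l := by
  simp only [gword, jonesProd, List.map_map, Function.comp_def, gcycle_eq_descProd]

theorem IsJonesNormal.isTT_map {l : List (ℕ × ℕ)} (hl : IsJonesNormal l)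
    (hrange : ∀ p ∈ l, 1 ≤ p.1 ∧ p.1 + p.2 < n) : IsTT n (l.map fun p => (p.1 + p.2, p.2)) := by
  refine ⟨?_, ?_, ?_⟩
  · simp only [List.forall_mem_map]
    intro p hp
    have := hrange p hp
    omega
  · rw [List.map_map]
    exact List.isChain_map_of_isChain _ (fun _ _ h => h.2) hl
  · simp only [List.map_map, Function.comp_def, Nat.add_sub_cancel]
    exact List.isChain_map_of_isChain _ (fun _ _ h => h.1) hl

theorem IsJonesNormal.exists_isTT_or_jonesProd_eq_zero {l : List (ℕ × ℕ)} (hl : IsJonesNormal l) :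
    (∃ l', IsTT n l' ∧ jonesProd (zg d n) l = gword d n l') ∨ jonesProd (zg d n) l = 0 := by
  by_cases hrange : ∀ p ∈ l, 1 ≤ p.1 ∧ p.1 + p.2 < n
  · exact .inl ⟨_, hl.isTT_map hrange, (gword_map_eq_jonesProd l).symm⟩
  · right
    push Not at hrange
    obtain ⟨p, hp, hout⟩ := hrange
    refine List.prod_eq_zero (List.mem_map.2 ⟨p, hp, ?_⟩)
    by_cases hp1 : p.1 = 0
    · exact descProd_eq_zero le_rfl (by omega) (zg_eq_zero (.inl hp1))
    · exact descProd_eq_zero (Nat.le_add_right _ p.2) (by omega)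
        (zg_eq_zero (.inr (hout (by omega))))

end TemperleyLiebSystem

theorem stmt18 (d n : ℕ) (hd : 1 ≤ d) (hn : 3 ≤ n) :
    Submodule.span K {a : YTL d n | ∃ (l : List (ℕ × ℕ)) (r : ℕ → ℕ),
      IsTT n l ∧ (∀ j, r j ≤ d - 1) ∧ a = tmon d n r * gword d n l} = ⊤ := by
  refine eq_top_iff.2 fun x _ => ?_
  have hx : x ∈ Submodule.span (framingAlgebra d n)
      (jonesProd (zg d n) '' {l | IsJonesNormal l}) :=
    isTemperleyLiebSystem_zg.span_jonesProd_eq_top adjoin_framingAlgebra_union_range_zg ▸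
      Submodule.mem_top
  refine Submodule.span_le.2 ?_ (mem_span_mul_of_mem_span framingAlgebra_le_span_tmon hx)
  rintro _ ⟨_, ⟨r, rfl⟩, _, ⟨l, hl, rfl⟩, rfl⟩
  rcases hl.exists_isTT_or_jonesProd_eq_zero (d := d) (n := n) with ⟨l', hl', heq⟩ | hzero
  · refine Submodule.subset_span ⟨l', fun j => r j % d, hl', fun j => ?_, ?_⟩
    · exact Nat.le_sub_one_of_lt (Nat.mod_lt (r j) hd)
    · simp only [heq, tmon_mod]
  · simp only [hzero, mul_zero, SetLike.mem_coe, zero_mem]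
end
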